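/- Let T_1 := min{t ≥ 0 : ρ̂_max^{(t)} > C_1/((mP)^{1/3} σ_n² d)}. On the event E, under Condition (H) in the sparse-unlearnable regime: (1) N/(76800·log^{3/2}(16NmP/δ)·η σ_0 σ_n³ d^{3/2}) ≤ T_1 ≤ 60N(1+exp(4C_1³))/(η σ_0 σ_n³ d^{3/2}); (2) T_0 < T_1, where T_0 is the signal-learning hitting time; and (3) there exist an unlearnable sample i ∈ S_U, a noise patch j ≠ s(X_i), and a filter r ∈ [m] such that for every iteration t with T_1 ≤ t ≤ T, the memorized noise response satisfies y_i⟨w_r^{(t)}, x_{i,j}⟩ ≥ C_1/(3(mP)^{1/3}). -/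

import Mathlib

open Finset MeasureTheory ProbabilityTheory
open scoped ENNReal NNReal

noncomputable section

namespace AD

/-- Cubic ReLU activation. -/
def phi (z : ℝ) : ℝ := (max 0 z) ^ 3

/-- Negative sigmoid `ψ(z) = 1/(1+e^z)`. -/
def psi (z : ℝ) : ℝ := 1 / (1 + Real.exp z)

/-- Logistic loss `ℓ(z) = log(1+e^{-z})`. -/
def lloss (z : ℝ) : ℝ := Real.log (1 + Real.exp (-z))

/-- Logistic sigmoid `σ(z) = 1/(1+e^{-z})`. -/
def sigm (z : ℝ) : ℝ := 1 / (1 + Real.exp (-z))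

/-- Euclidean inner product on `Fin d → ℝ`. -/
def dot {d : ℕ} (a b : Fin d → ℝ) : ℝ := ∑ k, a k * b k

/-- Squared Euclidean norm. -/
def sqnorm {d : ℕ} (a : Fin d → ℝ) : ℝ := dot a a

/-- First standard basis vector `e₁` (the learnable feature `u`). -/
def e1 (d : ℕ) (hd : 0 < d) : Fin d → ℝ := fun k => if k = (⟨0, hd⟩ : Fin d) then 1 else 0

/-- Last standard basis vector `e_d` (the unlearnable feature `v`). -/
def eLast (d : ℕ) (_hd : 0 < d) : Fin d → ℝ := fun k => if (k : ℕ) = d - 1 then 1 else 0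

/-- The two-layer student network
`f_W(X) = ∑_r ∑_p [φ(⟨w_r,x_p⟩) − φ(−⟨w_r,x_p⟩)]`. -/
def netOut {m P d : ℕ} (w : Fin m → Fin d → ℝ) (X : Fin P → Fin d → ℝ) : ℝ :=
  ∑ r, ∑ p, (phi (dot (w r) (X p)) - phi (-(dot (w r) (X p))))

/-- The concentration event `E` of the paper, i.e. properties (P1)–(P8), stated for
training patches `x`, initialization `w0`, labels `y` and signal-patch indices `sig`. -/
def EventEOn (N m P d : ℕ) (hd : 0 < d) (sigman sigma0 delta : ℝ)
    (y : Fin N → ℝ) (sig : Fin N → Fin P)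
    (x : Fin N → Fin P → Fin d → ℝ) (w0 : Fin m → Fin d → ℝ) : Prop :=
  -- (P1) noise-patch norms
  (∀ i j, j ≠ sig i →
      sigman ^ 2 * d / 2 ≤ sqnorm (x i j) ∧ sqnorm (x i j) ≤ 3 * sigman ^ 2 * d / 2) ∧
  -- (P2) pairwise noise inner products
  (∀ i k j q, j ≠ sig i → q ≠ sig k → ((i, j) : Fin N × Fin P) ≠ (k, q) →
      |dot (x i j) (x k q)| ≤
        2 * sigman ^ 2 * Real.sqrt ((d : ℝ) * Real.log ((16 : ℝ) * N ^ 2 * P ^ 2 / delta))) ∧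
  -- (P3) sup-norm of noise patches
  (∀ i j, j ≠ sig i → ∀ kk : Fin d,
      |x i j kk| ≤ sigman * Real.sqrt (2 * Real.log ((16 : ℝ) * d * N * P / delta))) ∧
  -- (P4) initialization norms
  (∀ r, Real.sqrt (sqnorm (w0 r)) ≤ 2 * sigma0 * Real.sqrt d) ∧
  -- (P5) initialization signal correlation
  (∀ r, |dot (w0 r) (e1 d hd)| ≤ sigma0 * Real.sqrt (2 * Real.log ((16 : ℝ) * m / delta))) ∧
  -- (P6) initialization noise correlations
  (∀ r i j, j ≠ sig i →
      |dot (w0 r) (x i j)| ≤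
        2 * sigma0 * sigman * Real.sqrt ((d : ℝ) * Real.log ((16 : ℝ) * N * m * P / delta))) ∧
  -- (P7) maximal initial signal alignment
  (∃ r, sigma0 / 2 ≤ dot (w0 r) (e1 d hd)) ∧
  -- (P8) maximal initial noise alignment
  (∀ i j, j ≠ sig i → ∃ r, sigma0 * sigman * Real.sqrt d / 4 ≤ y i * dot (w0 r) (x i j))
structure Setting where
  N : ℕ
  m : ℕ
  P : ℕ
  d : ℕ
  T : ℕ
  hN : 0 < N
  hm : 0 < m
  hP : 0 < P
  hd : 0 < d
  alpha : ℝ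
  sigman : ℝ
  sigma0 : ℝ
  eta : ℝ
  eps : ℝ
  delta : ℝ
  halpha : 0 < alpha
  hsigman : 0 < sigman
  hsigma0 : 0 < sigma0
  heta : 0 < eta
  heps : 0 < eps
  hepsalpha : eps < alpha
  hdelta0 : 0 < delta
  hdelta1 : delta < 1
  /-- labels -/
  y : Fin N → ℝ
  hy : ∀ i, y i = 1 ∨ y i = -1
  /-- signal patch index -/
  sig : Fin N → Fin P
  /-- learnable samples -/
  SL : Finset (Fin N)
  /-- unlearnable samples -/
  SU : Finset (Fin N)
  hunion : SL ∪ SU = Finset.univ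
  hdisj : Disjoint SL SU
  /-- training patches -/
  x : Fin N → Fin P → Fin d → ℝ
  hsigL : ∀ i ∈ SL, x i (sig i) = (alpha * y i) • e1 d hd
  hsigU : ∀ i ∈ SU, x i (sig i) = (alpha * y i) • eLast d hd
  hnoiseU : ∀ i j, j ≠ sig i → dot (x i j) (e1 d hd) = 0
  hnoiseV : ∀ i j, j ≠ sig i → dot (x i j) (eLast d hd) = 0
  /-- weight trajectory -/
  w : ℕ → Fin m → Fin d → ℝ
  hwperp : ∀ t r, dot (w t r) (eLast d hd) = 0
  /-- adversarial training examples at each iteration -/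
  xadv : ℕ → Fin N → Fin P → Fin d → ℝ
  hadvnoise : ∀ t i j, j ≠ sig i → xadv t i j = x i j
  hadvspan : ∀ t i, ∃ c : ℝ, xadv t i (sig i) - x i (sig i) = c • x i (sig i)
  hadvlinf : ∀ t i p k, |xadv t i p k - x i p k| ≤ eps
  hadvlearn : ∀ t : ℕ, ∀ i ∈ SL,
    alpha - eps ≤ y i * dot (xadv t i (sig i)) (e1 d hd) ∧
      y i * dot (xadv t i (sig i)) (e1 d hd) ≤ alpha

namespace Setting

variable (S : Setting)

/-- Adversarial margin `y_i f_{W^{(t)}}(X̃_i^{(t)})`. -/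
def marg (t : ℕ) (i : Fin S.N) : ℝ := S.y i * netOut (S.w t) (S.xadv t i)

/-- Signal coordinate `w_{r,1}^{(t)}`. -/
def wsig (t : ℕ) (r : Fin S.m) : ℝ := S.w t r ⟨0, S.hd⟩

/-- Unlearnable fraction `p_un = |S_U|/N`. -/
def pun : ℝ := (S.SU.card : ℝ) / S.N

/-- The adversarial-training gradient-descent dynamics. -/
def ATDyn : Prop :=
  ∀ t r, S.w (t + 1) r = S.w t r +
    (3 * S.eta / S.N) •
      ∑ i : Fin S.N, (psi (S.marg t i) * S.y i) •
        ∑ p : Fin S.P, (dot (S.w t r) (S.xadv t i p)) ^ 2 • S.xadv t i p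

/-- The signed gradient weight of sample `i` at iteration `t` under adversarial
distillation from teacher logits `fT`. -/
def gAD (fT : Fin S.N → ℝ) (t : ℕ) (i : Fin S.N) : ℝ :=
  sigm (S.y i * fT i) * psi (S.marg t i) - sigm (-(S.y i * fT i)) * psi (-(S.marg t i))

/-- The adversarial-distillation gradient-descent dynamics. -/
def ADDyn (fT : Fin S.N → ℝ) : Prop :=
  ∀ t r, S.w (t + 1) r = S.w t r +
    (3 * S.eta / S.N) •
      ∑ i : Fin S.N, (S.gAD fT t i * S.y i) •
        ∑ p : Fin S.P, (dot (S.w t r) (S.xadv t i p)) ^ 2 • S.xadv t i p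

/-- Noise coefficients `ρ_{i,j,r}^{(t)}` (adversarial training). -/
def rho (i : Fin S.N) (j : Fin S.P) (r : Fin S.m) : ℕ → ℝ
  | 0 => 0
  | t + 1 => rho i j r t + (3 * S.eta / S.N) * psi (S.marg t i) * (dot (S.w t r) (S.x i j)) ^ 2

/-- Noise coefficients under adversarial distillation. -/
def rhoAD (fT : Fin S.N → ℝ) (i : Fin S.N) (j : Fin S.P) (r : Fin S.m) : ℕ → ℝ
  | 0 => 0
  | t + 1 => rhoAD fT i j r t + (3 * S.eta / S.N) * S.gAD fT t i * (dot (S.w t r) (S.x i j)) ^ 2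

/-- The event `E` for a setting. -/
def EventE : Prop :=
  EventEOn S.N S.m S.P S.d S.hd S.sigman S.sigma0 S.delta S.y S.sig S.x (S.w 0)

/-- Condition (H): the parameter requirements of Condition 4.1 of the paper
(without the unlearnable-fraction regime item, which is imposed separately). -/
def CondH (C : ℝ) : Prop :=
  1 ≤ C ∧
  -- training horizon
  C * S.N / (S.eta * S.sigma0 * S.sigman ^ 3 * ((S.d : ℝ) * Real.sqrt S.d)) ≤ (S.T : ℝ) ∧
  -- dimension
  C * S.m ^ 2 * S.P ^ 2 * S.N ^ 2 *
      (Real.log ((S.T : ℝ) * S.N * S.m * S.P / S.delta)) ^ 4 ≤ (S.d : ℝ) ∧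
  -- signal strength
  C * S.sigman * Real.sqrt S.d * Real.log ((S.T : ℝ) * S.N * S.m * S.P / S.delta) /
      (((S.N : ℝ) * (1 - S.pun)) ^ ((1 : ℝ) / 3)) ≤ S.alpha ∧
  -- initialization scale
  S.sigma0 ≤
    C⁻¹ *
        min (min (1 / ((S.m : ℝ) ^ ((2 : ℝ) / 3) * (S.P : ℝ) ^ ((2 : ℝ) / 3) *
            S.sigman * Real.sqrt S.d))
          (1 / (S.alpha * (S.m : ℝ) ^ ((2 : ℝ) / 3))))
          (1 / (S.sigman * S.m ^ 2 * Real.sqrt S.P * S.d)) /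
      Real.log ((S.T : ℝ) * S.d * S.N * S.m * S.P / S.delta) ∧
  -- learning rate
  S.eta ≤
    C⁻¹ * min (min (1 / (S.alpha ^ 3 * S.sigma0)) (1 / (S.sigman ^ 2 * S.d))) (1 / S.alpha ^ 2) /
      Real.log ((S.T : ℝ) * S.N * S.m * S.P / S.delta) ∧
  -- adversarial budget
  C * S.sigman * S.m * Real.sqrt S.P * Real.log ((S.T : ℝ) * S.d * S.N * S.P / S.delta) ≤ S.eps ∧
  S.eps < C⁻¹ * min S.alpha (1 / (S.m * S.sigma0 * S.d)) ∧
  -- width and number of patches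
  C * Real.log ((S.N : ℝ) * S.P / S.delta) ≤ (S.m : ℝ) ∧
  (S.m : ℝ) ≤ C * Real.log S.d ^ C ∧
  2 ≤ S.P ∧ (S.P : ℝ) ≤ C

/-- The sparse-unlearnable regime of Condition 4.1. -/
def SparseRegime (C : ℝ) : Prop :=
  C / S.N ≤ S.pun ∧ S.pun ≤ C⁻¹ * Real.log S.d / S.N ∧
  C * S.m * S.P * Real.log ((S.T : ℝ) * S.d * S.N * S.m * S.P / S.delta) ≤ (S.N : ℝ)

/-- The noise-stability bound (NS) on learnable samples at iteration `t`. -/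
def NS (t : ℕ) : Prop :=
  ∀ r : Fin S.m, ∀ i ∈ S.SL, ∀ j, j ≠ S.sig i →
    |dot (S.w t r) (S.x i j)| ≤
      3 * S.sigma0 * S.sigman *
          Real.sqrt ((S.d : ℝ) * Real.log ((16 : ℝ) * S.N * S.m * S.P / S.delta)) +
        21 * S.pun * S.N * S.P * Real.log S.T ^ ((1 : ℝ) / 3) / Real.sqrt S.d *
          Real.sqrt (Real.log ((16 : ℝ) * S.N ^ 2 * S.P ^ 2 / S.delta))

/-- The signal-learning hitting time `T₀`. -/
def T0 (C0 : ℝ) : ℕ :=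
  sInf {t : ℕ | ∃ r, C0 / (S.alpha * (S.m : ℝ) ^ ((1 : ℝ) / 3)) < S.wsig t r}

/-- Maximum of the noise coefficients over unlearnable noise patches. -/
def rhoMaxSU (t : ℕ) : ℝ :=
  sSup {z : ℝ | ∃ r : Fin S.m, ∃ k ∈ S.SU, ∃ q, q ≠ S.sig k ∧ z = S.rho k q r t}

/-- Shifted noise coefficients `ρ̂_{i,j,r}^{(t)}`. -/
def rhoHat (i : Fin S.N) (j : Fin S.P) (r : Fin S.m) (t : ℕ) : ℝ :=
  S.rho i j r t + S.y i * dot (S.w 0 r) (S.x i j) / sqnorm (S.x i j)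

/-- Maximum shifted noise coefficient over unlearnable noise patches. -/
def rhoHatMax (t : ℕ) : ℝ :=
  sSup {z : ℝ | ∃ r : Fin S.m, ∃ k ∈ S.SU, ∃ q, q ≠ S.sig k ∧ z = S.rhoHat k q r t}

/-- The noise-memorization hitting time `T₁`. -/
def T1 (C1 : ℝ) : ℕ :=
  sInf {t : ℕ | C1 / (((S.m : ℝ) * S.P) ^ ((1 : ℝ) / 3) * S.sigman ^ 2 * S.d) < S.rhoHatMax t}

/-- The Good-Teacher horizon `T_max`. -/
def Tmax : ℝ :=
  S.N / (1000 * S.eta * S.m * S.P * S.sigma0 ^ 4 * S.sigman ^ 6 * (S.d : ℝ) ^ 3 *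
    Real.log ((16 : ℝ) * S.N * S.m * S.P / S.delta) ^ 2)

end Setting

/-! ### Elementary facts -/

lemma dot_add_left {d : ℕ} (a b c : Fin d → ℝ) : dot (a + b) c = dot a c + dot b c := by
  simp [dot, add_mul, Finset.sum_add_distrib]

lemma dot_smul_left {d : ℕ} (s : ℝ) (a c : Fin d → ℝ) : dot (s • a) c = s * dot a c := by
  simp [dot, Finset.mul_sum, mul_assoc]

lemma dot_comm {d : ℕ} (a b : Fin d → ℝ) : dot a b = dot b a := by
  simp [dot, mul_comm]

lemma dot_smul_right {d : ℕ} (s : ℝ) (a c : Fin d → ℝ) : dot a (s • c) = s * dot a c := by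
  rw [dot_comm, dot_smul_left, dot_comm]

lemma dot_sum_left {d : ℕ} {ι : Type*} (s : Finset ι) (f : ι → Fin d → ℝ) (c : Fin d → ℝ) :
    dot (∑ i ∈ s, f i) c = ∑ i ∈ s, dot (f i) c := by
  simp only [dot, Finset.sum_apply, Finset.sum_mul]
  exact Finset.sum_comm

lemma dot_e1 {d : ℕ} (hd : 0 < d) (a : Fin d → ℝ) : dot a (e1 d hd) = a ⟨0, hd⟩ := by
  simp [dot, e1]

lemma phi_sub_phi_neg (z : ℝ) : phi z - phi (-z) = z ^ 3 := by
  unfold phi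
  rcases le_total 0 z with h | h
  · rw [max_eq_right h, max_eq_left (by linarith)]; ring
  · rw [max_eq_left h, max_eq_right (by linarith)]; ring

lemma psi_pos (z : ℝ) : 0 < psi z := by unfold psi; positivity

lemma psi_le_one (z : ℝ) : psi z ≤ 1 := by
  unfold psi
  rw [div_le_one (by positivity)]
  linarith [Real.exp_pos z]

lemma psi_le_exp_neg (z : ℝ) : psi z ≤ Real.exp (-z) := by
  unfold psi
  rw [Real.exp_neg, ← one_div]
  apply one_div_le_one_div_of_le (Real.exp_pos z)
  linarith

lemma psi_anti {a b : ℝ} (h : a ≤ b) : psi b ≤ psi a := by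
  unfold psi
  apply one_div_le_one_div_of_le (by positivity)
  linarith [Real.exp_le_exp.2 h]

lemma cube_le_cube {a b : ℝ} (h : a ≤ b) : a ^ 3 ≤ b ^ 3 :=
  (Odd.strictMono_pow (by decide : Odd 3)).monotone h

lemma neg_cube_le_cube {z b : ℝ} (h : -b ≤ z) : -(b ^ 3) ≤ z ^ 3 := by
  have := cube_le_cube h
  linarith [show (-b) ^ 3 = -(b ^ 3) by ring]

/-- A sequence with quadratic growth `a (t+1) ≥ a t + c (a t)²` cannot stay below `1/c` for more
than `2 / (c a₀)` steps. -/
lemma quadratic_growth_time {a : ℕ → ℝ} {c : ℝ} {n : ℕ} (hc : 0 < c) (h0 : 0 < a 0)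
    (hstep : ∀ t < n, a t + c * a t ^ 2 ≤ a (t + 1)) (hle : ∀ t < n, c * a t ≤ 1) :
    (n : ℝ) * c * a 0 < 2 := by
  have key : ∀ t ≤ n, 0 < a t ∧ 1 / a t ≤ 1 / a 0 - t * (c / 2) := by
    intro t
    induction t with
    | zero => intro _; exact ⟨h0, by simp⟩
    | succ t ih =>
      intro ht
      obtain ⟨hp, hi⟩ := ih (by omega)
      have hs := hstep t (by omega)
      have hl := hle t (by omega)
      have hp' : 0 < a t + c * a t ^ 2 := by positivity
      refine ⟨lt_of_lt_of_le hp' hs, ?_⟩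
      have h1 : 1 / a (t + 1) ≤ 1 / (a t + c * a t ^ 2) := one_div_le_one_div_of_le hp' hs
      have h2 : 1 / (a t + c * a t ^ 2) ≤ 1 / a t - c / 2 := by
        have e : 1 / a t - c / 2 - 1 / (a t + c * a t ^ 2)
            = c * (1 - c * a t) / (2 * (1 + c * a t)) := by
          have : 1 + c * a t ≠ 0 := by positivity
          have : a t + c * a t ^ 2 ≠ 0 := hp'.ne'
          field_simp
          ring
        have : 0 ≤ c * (1 - c * a t) / (2 * (1 + c * a t)) := by
          apply div_nonneg
          · exact mul_nonneg hc.le (by linarith)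
          · positivity
        linarith
      push_cast
      linarith
  obtain ⟨hp, hi⟩ := key n le_rfl
  have h1 : 0 < 1 / a n := by positivity
  have h2 : n * (c / 2) < 1 / a 0 := by linarith
  rw [lt_div_iff₀ h0] at h2
  linarith

/-- If every `z p r` is at least `-b`, the sum of cubes dominates any single cube, up to the
total negative contribution. -/
lemma single_cube_le_sum {ι : Type*} {s : Finset ι} {z : ι → ℝ} {b : ℝ} (hb : 0 ≤ b)
    (hz : ∀ p ∈ s, -b ≤ z p) {p₀ : ι} (hp : p₀ ∈ s) :
    z p₀ ^ 3 - s.card * b ^ 3 ≤ ∑ p ∈ s, z p ^ 3 := by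
  classical
  rw [← Finset.add_sum_erase s _ hp]
  have h : ∑ p ∈ s.erase p₀, -(b ^ 3) ≤ ∑ p ∈ s.erase p₀, z p ^ 3 :=
    Finset.sum_le_sum fun p hp => neg_cube_le_cube (hz p (Finset.mem_of_mem_erase hp))
  rw [Finset.sum_const, nsmul_eq_mul] at h
  have h2 : ((s.erase p₀).card : ℝ) ≤ s.card := by
    exact_mod_cast Finset.card_le_card (Finset.erase_subset _ _)
  have := mul_le_mul_of_nonneg_right h2 (by positivity : 0 ≤ b ^ 3)
  linarith

namespace Setting

variable (S : Setting)

/-! ### Exact identities for the dynamics -/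

/-- Signed noise response `y_i ⟨w_r^{(t)}, x_{i,j}⟩`. -/
def resp (t : ℕ) (i : Fin S.N) (j : Fin S.P) (r : Fin S.m) : ℝ :=
  S.y i * dot (S.w t r) (S.x i j)

/-- Signed size of the adversarial signal patch along `e₁`. -/
def asig (t : ℕ) (i : Fin S.N) : ℝ := S.y i * dot (S.xadv t i (S.sig i)) (e1 S.d S.hd)

/-- Indices of the noise patches of sample `i`. -/
def noiseIdx (i : Fin S.N) : Finset (Fin S.P) := Finset.univ.erase (S.sig i)

lemma mem_noiseIdx {i : Fin S.N} {j : Fin S.P} : j ∈ S.noiseIdx i ↔ j ≠ S.sig i := by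
  simp [noiseIdx]

lemma card_noiseIdx_le (i : Fin S.N) : ((S.noiseIdx i).card : ℝ) ≤ S.P := by
  have h : (S.noiseIdx i).card ≤ S.P := by
    simp [noiseIdx]
  exact_mod_cast h

lemma sum_patches (i : Fin S.N) {M : Type*} [AddCommMonoid M] (f : Fin S.P → M) :
    ∑ p, f p = f (S.sig i) + ∑ p ∈ S.noiseIdx i, f p :=
  (Finset.add_sum_erase _ f (Finset.mem_univ _)).symm

lemma y_sq (i : Fin S.N) : S.y i * S.y i = 1 := by
  rcases S.hy i with h | h <;> simp [h]

lemma abs_y (i : Fin S.N) : |S.y i| = 1 := by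
  rcases S.hy i with h | h <;> simp [h]

lemma y_cube (i : Fin S.N) : S.y i ^ 3 = S.y i := by
  rcases S.hy i with h | h <;> rw [h] <;> norm_num

lemma resp_sq (t : ℕ) (i : Fin S.N) (j : Fin S.P) (r : Fin S.m) :
    S.resp t i j r ^ 2 = dot (S.w t r) (S.x i j) ^ 2 := by
  unfold resp
  linear_combination dot (S.w t r) (S.x i j) ^ 2 * S.y_sq i

lemma xadv_sig (t : ℕ) {i : Fin S.N} (hi : i ∈ S.SL) :
    S.xadv t i (S.sig i) = (S.y i * S.asig t i) • e1 S.d S.hd := by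
  obtain ⟨c, hc⟩ := S.hadvspan t i
  have h : S.xadv t i (S.sig i) = ((1 + c) * (S.alpha * S.y i)) • e1 S.d S.hd := by
    rw [sub_eq_iff_eq_add] at hc
    rw [hc, S.hsigL i hi, smul_smul, ← add_smul]
    congr 1
    ring
  have hee : dot (e1 S.d S.hd) (e1 S.d S.hd) = 1 := by
    rw [dot_e1]; simp [e1]
  unfold asig
  rw [h, dot_smul_left, hee]
  congr 1
  linear_combination (-(1 + c) * (S.alpha * S.y i)) * S.y_sq i

lemma dot_w_xadv_sig (t : ℕ) {i : Fin S.N} (hi : i ∈ S.SL) (r : Fin S.m) :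
    dot (S.w t r) (S.xadv t i (S.sig i)) = S.y i * S.asig t i * S.wsig t r := by
  rw [S.xadv_sig t hi, dot_smul_right, dot_e1, wsig]

lemma dot_w_xadv_sig_SU (t : ℕ) {i : Fin S.N} (hi : i ∈ S.SU) (r : Fin S.m) :
    dot (S.w t r) (S.xadv t i (S.sig i)) = 0 := by
  obtain ⟨c, hc⟩ := S.hadvspan t i
  rw [sub_eq_iff_eq_add] at hc
  rw [hc, S.hsigU i hi, smul_smul, ← add_smul, dot_smul_right, S.hwperp, mul_zero]

lemma mem_SL_or_SU (i : Fin S.N) : i ∈ S.SL ∨ i ∈ S.SU := by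
  have : i ∈ S.SL ∪ S.SU := by rw [S.hunion]; exact Finset.mem_univ i
  exact Finset.mem_union.1 this

lemma marg_eq (t : ℕ) (i : Fin S.N) :
    S.marg t i = ∑ r, ((S.y i * dot (S.w t r) (S.xadv t i (S.sig i))) ^ 3 +
      ∑ p ∈ S.noiseIdx i, S.resp t i p r ^ 3) := by
  have h (z : ℝ) : (S.y i * z) ^ 3 = S.y i * z ^ 3 := by rw [mul_pow, y_cube]
  unfold marg netOut
  rw [Finset.mul_sum]
  refine Finset.sum_congr rfl fun r _ => ?_
  rw [S.sum_patches i, mul_add, phi_sub_phi_neg, h, Finset.mul_sum]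
  congr 1
  refine Finset.sum_congr rfl fun p hp => ?_
  rw [phi_sub_phi_neg, S.hadvnoise t i p (S.mem_noiseIdx.1 hp), resp, h]

lemma marg_SL (t : ℕ) {i : Fin S.N} (hi : i ∈ S.SL) :
    S.marg t i = S.asig t i ^ 3 * ∑ r, S.wsig t r ^ 3 +
      ∑ r, ∑ p ∈ S.noiseIdx i, S.resp t i p r ^ 3 := by
  rw [marg_eq, Finset.sum_add_distrib, Finset.mul_sum]
  congr 1
  refine Finset.sum_congr rfl fun r _ => ?_
  rw [S.dot_w_xadv_sig t hi, ← mul_pow]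
  congr 1
  linear_combination (S.asig t i * S.wsig t r) * S.y_sq i

lemma marg_SU (t : ℕ) {i : Fin S.N} (hi : i ∈ S.SU) :
    S.marg t i = ∑ r, ∑ p ∈ S.noiseIdx i, S.resp t i p r ^ 3 := by
  rw [marg_eq]
  refine Finset.sum_congr rfl fun r _ => ?_
  rw [S.dot_w_xadv_sig_SU t hi]
  simp

lemma noise_zero_coord {i : Fin S.N} {j : Fin S.P} (hj : j ≠ S.sig i) :
    S.x i j ⟨0, S.hd⟩ = 0 := by
  have := S.hnoiseU i j hj
  rwa [dot_e1] at this

variable {S}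

lemma wsig_succ (h : S.ATDyn) (t : ℕ) (r : Fin S.m) :
    S.wsig (t + 1) r = S.wsig t r + (3 * S.eta / S.N) *
      (∑ i ∈ S.SL, psi (S.marg t i) * S.asig t i ^ 3) * S.wsig t r ^ 2 := by
  have hsum : (∑ i : Fin S.N, (psi (S.marg t i) * S.y i) •
        ∑ p : Fin S.P, (dot (S.w t r) (S.xadv t i p)) ^ 2 • S.xadv t i p) ⟨0, S.hd⟩
      = ∑ i ∈ S.SL, psi (S.marg t i) * S.asig t i ^ 3 * S.wsig t r ^ 2 := by
    rw [Finset.sum_apply, ← S.hunion, Finset.sum_union S.hdisj]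
    have hnoise (i : Fin S.N) :
        (∑ p ∈ S.noiseIdx i, (dot (S.w t r) (S.xadv t i p)) ^ 2 • S.xadv t i p) ⟨0, S.hd⟩ = 0 := by
      rw [Finset.sum_apply]
      refine Finset.sum_eq_zero fun p hp => ?_
      have hp' := S.mem_noiseIdx.1 hp
      rw [Pi.smul_apply, S.hadvnoise t i p hp', S.noise_zero_coord hp', smul_zero]
    have hU : ∑ i ∈ S.SU, ((psi (S.marg t i) * S.y i) •
        ∑ p : Fin S.P, (dot (S.w t r) (S.xadv t i p)) ^ 2 • S.xadv t i p) ⟨0, S.hd⟩ = 0 := by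
      refine Finset.sum_eq_zero fun i hi => ?_
      rw [Pi.smul_apply, S.sum_patches i, Pi.add_apply, hnoise, S.dot_w_xadv_sig_SU t hi]
      simp
    rw [hU, add_zero]
    refine Finset.sum_congr rfl fun i hi => ?_
    rw [Pi.smul_apply, S.sum_patches i, Pi.add_apply, hnoise, S.dot_w_xadv_sig t hi,
      S.xadv_sig t hi]
    simp only [Pi.smul_apply, e1, smul_eq_mul, if_true]
    linear_combination (psi (S.marg t i) * S.asig t i ^ 3 * S.wsig t r ^ 2 *
      (S.y i * S.y i + 1)) * S.y_sq i
  have := congrFun (h t r) ⟨0, S.hd⟩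
  rw [Pi.add_apply, Pi.smul_apply, hsum] at this
  unfold wsig at this ⊢
  rw [this, ← Finset.sum_mul, smul_eq_mul]
  ring

lemma dot_w_noise (h : S.ATDyn) (t : ℕ) {i : Fin S.N} {j : Fin S.P} (hj : j ≠ S.sig i)
    (r : Fin S.m) :
    dot (S.w t r) (S.x i j) = dot (S.w 0 r) (S.x i j) +
      ∑ k, ∑ q ∈ S.noiseIdx k, S.y k * S.rho k q r t * dot (S.x k q) (S.x i j) := by
  induction t with
  | zero => simp [rho]
  | succ t ih =>
    rw [h t r, dot_add_left, ih, add_assoc, dot_smul_left, dot_sum_left]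
    congr 1
    rw [Finset.mul_sum, ← Finset.sum_add_distrib]
    refine Finset.sum_congr rfl fun k _ => ?_
    rw [dot_smul_left, S.sum_patches k, dot_add_left, dot_smul_left, dot_sum_left]
    have h0 : (dot (S.w t r) (S.xadv t k (S.sig k))) ^ 2 *
        dot (S.xadv t k (S.sig k)) (S.x i j) = 0 := by
      rcases S.mem_SL_or_SU k with hk | hk
      · rw [S.xadv_sig t hk, dot_smul_left, dot_comm (e1 _ _), S.hnoiseU i j hj]; simp
      · rw [S.dot_w_xadv_sig_SU t hk]; simp
    rw [h0, zero_add, Finset.mul_sum, Finset.mul_sum, ← Finset.sum_add_distrib]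
    refine Finset.sum_congr rfl fun q hq => ?_
    rw [S.hadvnoise t k q (S.mem_noiseIdx.1 hq), dot_smul_left, rho]
    ring

lemma rho_succ (i : Fin S.N) (j : Fin S.P) (r : Fin S.m) (t : ℕ) :
    S.rho i j r (t + 1) =
      S.rho i j r t + (3 * S.eta / S.N) * psi (S.marg t i) * S.resp t i j r ^ 2 := by
  rw [resp_sq, rho]

lemma step_nonneg (S : Setting) : 0 ≤ 3 * S.eta / S.N := by
  have := S.heta
  positivity

lemma rho_le_succ (i : Fin S.N) (j : Fin S.P) (r : Fin S.m) (t : ℕ) :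
    S.rho i j r t ≤ S.rho i j r (t + 1) := by
  rw [rho_succ]
  have := mul_nonneg (mul_nonneg S.step_nonneg (psi_pos (S.marg t i)).le)
    (sq_nonneg (S.resp t i j r))
  linarith

lemma rho_mono (i : Fin S.N) (j : Fin S.P) (r : Fin S.m) : Monotone (S.rho i j r) :=
  monotone_nat_of_le_succ (rho_le_succ i j r)

lemma rho_nonneg (i : Fin S.N) (j : Fin S.P) (r : Fin S.m) (t : ℕ) : 0 ≤ S.rho i j r t :=
  rho_mono i j r (Nat.zero_le t)

lemma rhoHat_mono (i : Fin S.N) (j : Fin S.P) (r : Fin S.m) : Monotone (S.rhoHat i j r) :=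
  fun _ _ h => by simpa [rhoHat] using rho_mono i j r h

lemma asig_bounds (t : ℕ) {i : Fin S.N} (hi : i ∈ S.SL) :
    S.alpha - S.eps ≤ S.asig t i ∧ S.asig t i ≤ S.alpha := S.hadvlearn t i hi

lemma asig_pos (t : ℕ) {i : Fin S.N} (hi : i ∈ S.SL) : 0 < S.asig t i := by
  have := (asig_bounds t hi).1
  linarith [S.hepsalpha]

lemma wsig_le_succ (h : S.ATDyn) (r : Fin S.m) (t : ℕ) : S.wsig t r ≤ S.wsig (t + 1) r := by
  rw [wsig_succ h]
  have h1 : 0 ≤ ∑ i ∈ S.SL, psi (S.marg t i) * S.asig t i ^ 3 :=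
    Finset.sum_nonneg fun i hi => mul_nonneg (psi_pos _).le (pow_nonneg (asig_pos t hi).le 3)
  have := mul_nonneg (mul_nonneg S.step_nonneg h1) (sq_nonneg (S.wsig t r))
  linarith

lemma wsig_mono (h : S.ATDyn) (r : Fin S.m) : Monotone (fun t => S.wsig t r) :=
  monotone_nat_of_le_succ (wsig_le_succ h r)

/-! ### Scales -/

/-- Typical squared noise norm `σ_n² d`. -/
def D (S : Setting) : ℝ := S.sigman ^ 2 * S.d

/-- Bound on noise inner products in the event `E`. -/
def chi (S : Setting) : ℝ :=
  2 * S.sigman ^ 2 * Real.sqrt ((S.d : ℝ) * Real.log ((16 : ℝ) * S.N ^ 2 * S.P ^ 2 / S.delta))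

/-- The logarithm `log(16NmP/δ)`. -/
def L (S : Setting) : ℝ := Real.log ((16 : ℝ) * S.N * S.m * S.P / S.delta)

/-- The logarithm `log(TNmP/δ)`. -/
def LT (S : Setting) : ℝ := Real.log ((S.T : ℝ) * S.N * S.m * S.P / S.delta)

/-- Bound on initial noise responses in the event `E`. -/
def A0 (S : Setting) : ℝ := 2 * S.sigma0 * S.sigman * Real.sqrt ((S.d : ℝ) * S.L)

/-- Bound on initial signal coordinates in the event `E`. -/
def B0 (S : Setting) : ℝ := S.sigma0 * Real.sqrt (2 * Real.log ((16 : ℝ) * S.m / S.delta))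

/-- The cube root of `mP`. -/
def cbrtMP (S : Setting) : ℝ := ((S.m : ℝ) * S.P) ^ ((1 : ℝ) / 3)

/-- The cube root of `m`. -/
def cbrtM (S : Setting) : ℝ := (S.m : ℝ) ^ ((1 : ℝ) / 3)

/-- The noise-memorization time scale `N / (η σ₀ σ_n³ d^{3/2})`. -/
def timeScale (S : Setting) : ℝ :=
  S.N / (S.eta * S.sigma0 * S.sigman ^ 3 * ((S.d : ℝ) * Real.sqrt S.d))

/-- The parameter inequalities used in the analysis of the dynamics. -/
structure ParamFacts (S : Setting) (ζ C : ℝ) : Prop where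
  one_le_L : 1 ≤ S.L
  L_le : S.L ≤ S.LT
  two_le_LT : 2 ≤ S.LT
  T_pos : 0 < S.T
  exp_le : Real.exp (-S.LT) ≤ 1 / S.T
  cross : S.N * S.P * S.chi * S.cbrtMP * S.LT ≤ ζ * S.D
  A0_le : C * S.A0 * S.cbrtMP ≤ 2
  B0_le : C * (S.alpha * S.B0) * S.cbrtM ≤ 2
  eta_D : C * (S.eta * S.D * S.LT) ≤ 1
  eta_alpha : C * (S.eta * S.alpha ^ 2 * S.LT) ≤ 1
  signal : C ^ 3 * S.sigman ^ 3 * (S.d * Real.sqrt S.d) * S.LT ^ 3 ≤ S.alpha ^ 3 * S.SL.card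
  eps_le : C * S.eps ≤ S.alpha
  SU_nonempty : S.SU.Nonempty
  SL_nonempty : S.SL.Nonempty
  two_le_P : 2 ≤ S.P
  scale_large : 76800 * (S.L * Real.sqrt S.L) ≤ S.timeScale
  scale_le_T : C * S.timeScale ≤ S.T

variable {ζ C : ℝ}

lemma D_pos (S : Setting) : 0 < S.D := by
  have := S.hsigman
  have := S.hd
  unfold D
  positivity

lemma A0_nonneg (S : Setting) : 0 ≤ S.A0 := by
  have := S.hsigman
  have := S.hsigma0
  unfold A0
  positivity

lemma B0_nonneg (S : Setting) : 0 ≤ S.B0 := by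
  have := S.hsigma0
  unfold B0
  positivity

lemma chi_nonneg (S : Setting) : 0 ≤ S.chi := by
  have := S.hsigman
  unfold chi
  positivity

lemma one_le_m (S : Setting) : (1 : ℝ) ≤ S.m := by exact_mod_cast S.hm

lemma one_le_P (S : Setting) : (1 : ℝ) ≤ S.P := by exact_mod_cast S.hP

lemma one_le_N (S : Setting) : (1 : ℝ) ≤ S.N := by exact_mod_cast S.hN

lemma one_le_d (S : Setting) : (1 : ℝ) ≤ S.d := by exact_mod_cast S.hd

lemma rpow_third_cube {z : ℝ} (hz : 0 ≤ z) : (z ^ ((1 : ℝ) / 3)) ^ 3 = z := by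
  rw [← Real.rpow_natCast, ← Real.rpow_mul hz]
  norm_num

lemma one_le_cbrtMP (S : Setting) : 1 ≤ S.cbrtMP :=
  Real.one_le_rpow (by nlinarith [S.one_le_m, S.one_le_P]) (by norm_num)

lemma cbrtMP_cube (S : Setting) : S.cbrtMP ^ 3 = S.m * S.P :=
  rpow_third_cube (by positivity)

lemma one_le_cbrtM (S : Setting) : 1 ≤ S.cbrtM :=
  Real.one_le_rpow S.one_le_m (by norm_num)

lemma cbrtM_cube (S : Setting) : S.cbrtM ^ 3 = S.m :=
  rpow_third_cube (by positivity)

/-! ### Consequences of the concentration event -/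

lemma sqnorm_bounds (hE : S.EventE) {i : Fin S.N} {j : Fin S.P} (hj : j ≠ S.sig i) :
    S.D / 2 ≤ sqnorm (S.x i j) ∧ sqnorm (S.x i j) ≤ 3 * S.D / 2 := by
  have := hE.1 i j hj
  unfold D
  constructor
  · linarith [this.1]
  · linarith [this.2]

lemma abs_resp_zero_le (hE : S.EventE) {i : Fin S.N} {j : Fin S.P} (hj : j ≠ S.sig i)
    (r : Fin S.m) : |S.resp 0 i j r| ≤ S.A0 := by
  have := hE.2.2.2.2.2.1 r i j hj
  rw [resp, abs_mul, abs_y, one_mul]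
  exact this

lemma neg_B0_le_wsig (hdyn : S.ATDyn) (hE : S.EventE) (t : ℕ) (r : Fin S.m) :
    -S.B0 ≤ S.wsig t r := by
  have h := hE.2.2.2.2.1 r
  rw [dot_e1] at h
  exact (abs_le.1 h).1.trans (wsig_mono hdyn r (Nat.zero_le t))

lemma exists_wsig_zero (hE : S.EventE) : ∃ r, S.sigma0 / 2 ≤ S.wsig 0 r := by
  obtain ⟨r, hr⟩ := hE.2.2.2.2.2.2.1
  exact ⟨r, by rwa [dot_e1] at hr⟩

lemma rhoHat_mul_sqnorm (hE : S.EventE) {i : Fin S.N} {j : Fin S.P} (hj : j ≠ S.sig i)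
    (r : Fin S.m) (t : ℕ) :
    S.rhoHat i j r t * sqnorm (S.x i j) = S.resp 0 i j r + S.rho i j r t * sqnorm (S.x i j) := by
  have h : sqnorm (S.x i j) ≠ 0 := by
    have := (sqnorm_bounds hE hj).1
    have := S.D_pos
    linarith
  rw [rhoHat, resp]
  field_simp
  ring

/-- The noise response is `ρ̂ ‖x‖²` up to cross terms. -/
lemma resp_approx (hdyn : S.ATDyn) (hE : S.EventE) {t : ℕ} {r : Fin S.m} {b : ℝ} (hb : 0 ≤ b)
    (hrho : ∀ k q, q ≠ S.sig k → S.rho k q r t ≤ b)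
    {i : Fin S.N} {j : Fin S.P} (hj : j ≠ S.sig i) :
    |S.resp t i j r - S.rhoHat i j r t * sqnorm (S.x i j)| ≤ S.N * S.P * S.chi * b := by
  classical
  have hrw : S.resp t i j r - S.rhoHat i j r t * sqnorm (S.x i j) =
      ∑ k, ∑ q ∈ S.noiseIdx k, if k = i ∧ q = j then 0 else
        S.y i * (S.y k * S.rho k q r t * dot (S.x k q) (S.x i j)) := by
    have hall : S.resp t i j r = S.resp 0 i j r +
        ∑ k, ∑ q ∈ S.noiseIdx k, S.y i * (S.y k * S.rho k q r t * dot (S.x k q) (S.x i j)) := by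
      unfold resp
      rw [dot_w_noise hdyn t hj r, mul_add, Finset.mul_sum]
      simp_rw [Finset.mul_sum]
    have hdiag : S.rho i j r t * sqnorm (S.x i j) =
        ∑ k, ∑ q ∈ S.noiseIdx k, if k = i ∧ q = j then
          S.y i * (S.y k * S.rho k q r t * dot (S.x k q) (S.x i j)) else 0 := by
      rw [Finset.sum_eq_single i, Finset.sum_eq_single j]
      · rw [if_pos ⟨rfl, rfl⟩, sqnorm]
        linear_combination (-S.rho i j r t * dot (S.x i j) (S.x i j)) * S.y_sq i
      · intro q _ hq
        simp [hq]
      · intro hn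
        exact absurd (S.mem_noiseIdx.2 hj) hn
      · intro k _ hk
        simp [hk]
      · simp
    rw [rhoHat_mul_sqnorm hE hj, hall, hdiag, add_sub_add_left_eq_sub, ← Finset.sum_sub_distrib]
    refine Finset.sum_congr rfl fun k _ => ?_
    rw [← Finset.sum_sub_distrib]
    refine Finset.sum_congr rfl fun q _ => ?_
    split_ifs <;> simp
  have hterm : ∀ k, ∀ q ∈ S.noiseIdx k, |if k = i ∧ q = j then 0 else
        S.y i * (S.y k * S.rho k q r t * dot (S.x k q) (S.x i j))| ≤ S.chi * b := by
    intro k q hq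
    have hq' := S.mem_noiseIdx.1 hq
    split_ifs with hc
    · simpa using mul_nonneg S.chi_nonneg hb
    · have h2 := hE.2.1 k i q j hq' hj (by simpa using hc)
      rw [abs_mul, abs_mul, abs_mul, abs_y, abs_y, one_mul, one_mul,
        abs_of_nonneg (rho_nonneg k q r t), mul_comm]
      exact mul_le_mul h2 (hrho k q hq') (rho_nonneg k q r t) S.chi_nonneg
  have hcb : 0 ≤ S.chi * b := mul_nonneg S.chi_nonneg hb
  rw [hrw]
  calc |∑ k, ∑ q ∈ S.noiseIdx k, if k = i ∧ q = j then 0 else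
        S.y i * (S.y k * S.rho k q r t * dot (S.x k q) (S.x i j))|
      ≤ ∑ k, ∑ q ∈ S.noiseIdx k, |if k = i ∧ q = j then 0 else
        S.y i * (S.y k * S.rho k q r t * dot (S.x k q) (S.x i j))| :=
        (Finset.abs_sum_le_sum_abs _ _).trans
          (Finset.sum_le_sum fun k _ => Finset.abs_sum_le_sum_abs _ _)
    _ ≤ ∑ k, ∑ q ∈ S.noiseIdx k, S.chi * b :=
        Finset.sum_le_sum fun k _ => Finset.sum_le_sum (hterm k)
    _ ≤ ∑ k : Fin S.N, S.P * (S.chi * b) := by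
        refine Finset.sum_le_sum fun k _ => ?_
        rw [Finset.sum_const, nsmul_eq_mul]
        exact mul_le_mul_of_nonneg_right (S.card_noiseIdx_le k) hcb
    _ = S.N * S.P * S.chi * b := by
        rw [Finset.sum_const, nsmul_eq_mul, Finset.card_univ, Fintype.card_fin]
        ring

/-! ### Bounds valid up to the horizon -/

lemma cross_le (F : S.ParamFacts ζ C) {b B : ℝ} (hb : 0 ≤ b) (hbB : S.D * b ≤ B) (hζ : 0 ≤ ζ) :
    S.N * S.P * S.chi * b ≤ ζ * B / (S.cbrtMP * S.LT) := by
  have hq := S.one_le_cbrtMP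
  have hL := F.two_le_LT
  rw [le_div_iff₀ (by positivity)]
  have h1 := mul_le_mul_of_nonneg_right F.cross hb
  have h2 := mul_le_mul_of_nonneg_left hbB hζ
  linarith

lemma A0_le_div (F : S.ParamFacts ζ C) (hC : 0 < C) (hζC : 2 ≤ C * ζ) :
    S.A0 ≤ ζ / S.cbrtMP := by
  have hq := S.one_le_cbrtMP
  rw [le_div_iff₀ (by positivity)]
  have := F.A0_le
  have h : C * (S.A0 * S.cbrtMP) ≤ C * ζ := by linarith
  exact le_of_mul_le_mul_left h hC

lemma noise_cubes_lower {t : ℕ} {i : Fin S.N} {b : ℝ} (hb : 0 ≤ b)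
    (h : ∀ p r, p ≠ S.sig i → -(b / S.cbrtMP) ≤ S.resp t i p r) {p : Fin S.P} (hp : p ≠ S.sig i)
    (r : Fin S.m) :
    S.resp t i p r ^ 3 - b ^ 3 ≤ ∑ r, ∑ p ∈ S.noiseIdx i, S.resp t i p r ^ 3 := by
  have hq := S.one_le_cbrtMP
  have hs := single_cube_le_sum (s := Finset.univ ×ˢ S.noiseIdx i)
    (z := fun a : Fin S.m × Fin S.P => S.resp t i a.2 a.1) (b := b / S.cbrtMP) (by positivity)
    (fun a ha => h _ _ (S.mem_noiseIdx.1 (Finset.mem_product.1 ha).2))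
    (p₀ := (r, p)) (Finset.mem_product.2 ⟨Finset.mem_univ _, S.mem_noiseIdx.2 hp⟩)
  rw [Finset.sum_product] at hs
  have hcard : (((Finset.univ : Finset (Fin S.m)) ×ˢ S.noiseIdx i).card : ℝ) ≤ S.cbrtMP ^ 3 := by
    rw [Finset.card_product, cbrtMP_cube, Finset.card_univ, Fintype.card_fin]
    push_cast
    exact mul_le_mul_of_nonneg_left (S.card_noiseIdx_le i) (by positivity)
  have h2 := mul_le_mul_of_nonneg_right hcard (by positivity : 0 ≤ (b / S.cbrtMP) ^ 3)
  have h3 : S.cbrtMP ^ 3 * (b / S.cbrtMP) ^ 3 = b ^ 3 := by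
    field_simp
  simp only at hs
  linarith

lemma noise_cubes_upper {t : ℕ} {i : Fin S.N} {b : ℝ} (hb : 0 ≤ b)
    (h : ∀ p r, p ≠ S.sig i → S.resp t i p r ≤ b / S.cbrtMP) :
    ∑ r, ∑ p ∈ S.noiseIdx i, S.resp t i p r ^ 3 ≤ b ^ 3 := by
  have hq := S.one_le_cbrtMP
  calc ∑ r, ∑ p ∈ S.noiseIdx i, S.resp t i p r ^ 3
      ≤ ∑ r : Fin S.m, ∑ p ∈ S.noiseIdx i, (b / S.cbrtMP) ^ 3 :=
        Finset.sum_le_sum fun r _ => Finset.sum_le_sum fun p hp =>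
          cube_le_cube (h p r (S.mem_noiseIdx.1 hp))
    _ = S.m * ((S.noiseIdx i).card * (b / S.cbrtMP) ^ 3) := by simp
    _ ≤ S.m * (S.P * (b / S.cbrtMP) ^ 3) := by
        gcongr
        exact_mod_cast S.card_noiseIdx_le i
    _ = S.cbrtMP ^ 3 * (b / S.cbrtMP) ^ 3 := by rw [cbrtMP_cube]; ring
    _ = b ^ 3 := by field_simp

lemma signal_cubes_lower (hdyn : S.ATDyn) (hE : S.EventE) (F : S.ParamFacts ζ C) (hC : 4 ≤ C)
    (t : ℕ) {i : Fin S.N} (hi : i ∈ S.SL) (r : Fin S.m) :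
    (S.asig t i * S.wsig t r) ^ 3 - 1 / 4 ≤ S.asig t i ^ 3 * ∑ r, S.wsig t r ^ 3 := by
  have ha := asig_pos t hi
  have hμ := S.one_le_cbrtM
  have hB := S.B0_nonneg
  have hs := single_cube_le_sum (s := Finset.univ) (z := fun r => S.wsig t r) hB
    (fun r _ => neg_B0_le_wsig hdyn hE t r) (Finset.mem_univ r)
  rw [Finset.card_univ, Fintype.card_fin, ← cbrtM_cube] at hs
  have h1 := mul_le_mul_of_nonneg_left hs (pow_pos ha 3).le
  have h2 : S.asig t i * S.B0 * S.cbrtM ≤ 1 / 2 := by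
    have hle : S.asig t i * S.B0 * S.cbrtM ≤ S.alpha * S.B0 * S.cbrtM := by
      have := (asig_bounds t hi).2
      gcongr
    have hB0 := F.B0_le
    have hn : 0 ≤ S.alpha * S.B0 * S.cbrtM := by
      have := S.halpha
      positivity
    nlinarith
  have h3 : (S.asig t i * S.B0 * S.cbrtM) ^ 3 ≤ (1 / 2) ^ 3 := cube_le_cube h2
  have e : (S.asig t i * S.B0 * S.cbrtM) ^ 3 = S.asig t i ^ 3 * (S.cbrtM ^ 3 * S.B0 ^ 3) := by
    ring
  rw [e] at h3
  rw [mul_pow]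
  linarith

lemma marg_lower (hdyn : S.ATDyn) (hE : S.EventE) (F : S.ParamFacts ζ C) (hC : 4 ≤ C)
    {t : ℕ} {i : Fin S.N}
    (h : ∀ p r, p ≠ S.sig i → -((1 / 2) / S.cbrtMP) ≤ S.resp t i p r)
    {p : Fin S.P} (hp : p ≠ S.sig i) (r : Fin S.m) :
    S.resp t i p r ^ 3 - 1 ≤ S.marg t i := by
  have h1 := noise_cubes_lower (by norm_num) h hp r
  rcases S.mem_SL_or_SU i with hi | hi
  · rw [S.marg_SL t hi]
    have h2 := signal_cubes_lower hdyn hE F hC t hi r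
    have h3 : -(1 / 2) ^ 3 ≤ (S.asig t i * S.wsig t r) ^ 3 := by
      apply neg_cube_le_cube
      have ha := asig_pos t hi
      have hB := F.B0_le
      have h4 := neg_B0_le_wsig hdyn hE t r
      have h5 := (asig_bounds t hi).2
      have hB0 := S.B0_nonneg
      have hμ := S.one_le_cbrtM
      have h6 : S.asig t i * S.B0 ≤ S.alpha * S.B0 := by gcongr
      have h7 : 0 ≤ S.alpha * S.B0 := by
        have := S.halpha
        positivity
      have h8 : S.alpha * S.B0 * 4 ≤ 2 := by
        calc S.alpha * S.B0 * 4 ≤ S.alpha * S.B0 * C := by gcongr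
          _ ≤ C * (S.alpha * S.B0) * S.cbrtM := by
            rw [mul_comm]
            exact le_mul_of_one_le_right (by positivity) hμ
          _ ≤ 2 := hB
      nlinarith
    linarith
  · rw [S.marg_SU t hi]
    linarith

lemma exists_noise_patch (F : S.ParamFacts ζ C) (i : Fin S.N) : ∃ p, p ≠ S.sig i := by
  have : Nontrivial (Fin S.P) := Fin.nontrivial_iff_two_le.2 F.two_le_P
  exact exists_ne (S.sig i)

/-- The standing smallness assumptions on the constants. -/
structure SmallConst (ζ C : ℝ) : Prop where
  zeta_pos : 0 < ζ
  zeta_le : ζ ≤ 1 / 2500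
  C_large : 2000 ≤ C
  C_zeta : 2 ≤ C * ζ

lemma resp_of_rho_le (hdyn : S.ATDyn) (hE : S.EventE) (F : S.ParamFacts ζ C)
    (hc : SmallConst ζ C) {lam : ℝ} (hlam : 0 ≤ lam) (hlam' : lam ≤ S.LT) {t : ℕ} {r : Fin S.m}
    (hrho : ∀ k q, q ≠ S.sig k → S.D * S.rho k q r t ≤ 10 * lam)
    {i : Fin S.N} {j : Fin S.P} (hj : j ≠ S.sig i) :
    |S.resp t i j r - S.rhoHat i j r t * sqnorm (S.x i j)| ≤ 10 * ζ / S.cbrtMP := by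
  have hq := S.one_le_cbrtMP
  have hD := S.D_pos
  have hL := F.two_le_LT
  have hζ := hc.zeta_pos
  have h1 := resp_approx hdyn hE (b := 10 * lam / S.D) (by positivity)
    (fun k q hk => by rw [le_div_iff₀ hD, mul_comm]; exact hrho k q hk) hj
  have h2 := cross_le F (b := 10 * lam / S.D) (B := 10 * lam) (by positivity)
    (by rw [mul_div_cancel₀ _ hD.ne']) hζ.le
  refine h1.trans (h2.trans ?_)
  rw [div_le_div_iff₀ (by positivity) (by positivity)]
  have : ζ * (10 * lam) * S.cbrtMP ≤ ζ * (10 * S.LT) * S.cbrtMP := by gcongr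
  linarith

lemma resp_lower_of_approx (hE : S.EventE) (F : S.ParamFacts ζ C)
    (hc : SmallConst ζ C) {t : ℕ} {r : Fin S.m} {i : Fin S.N} {j : Fin S.P} (hj : j ≠ S.sig i)
    (h : |S.resp t i j r - S.rhoHat i j r t * sqnorm (S.x i j)| ≤ 10 * ζ / S.cbrtMP) :
    S.D / 2 * S.rho i j r t - 11 * ζ / S.cbrtMP ≤ S.resp t i j r ∧
      S.resp t i j r ≤ 3 * S.D / 2 * S.rho i j r t + 11 * ζ / S.cbrtMP := by
  have hA := A0_le_div F (by linarith [hc.C_large]) hc.C_zeta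
  have h0 := abs_le.1 (abs_resp_zero_le hE hj r)
  have h1 := abs_le.1 h
  rw [rhoHat_mul_sqnorm hE hj] at h1
  have hn := sqnorm_bounds hE hj
  have hr := rho_nonneg i j r t
  have h2 := mul_le_mul_of_nonneg_left hn.1 hr
  have h3 := mul_le_mul_of_nonneg_left hn.2 hr
  have e : 11 * ζ / S.cbrtMP = 10 * ζ / S.cbrtMP + ζ / S.cbrtMP := by ring
  rw [e]
  constructor <;> linarith [h0.1, h0.2, h1.1, h1.2]

/-- Noise coefficients never exceed `10 (log(TNmP/δ))^{1/3} / (σ_n² d)`. -/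
lemma rho_coarse (hdyn : S.ATDyn) (hE : S.EventE) (F : S.ParamFacts ζ C)
    (hc : SmallConst ζ C) :
    ∀ t ≤ S.T, ∀ r i j, j ≠ S.sig i →
      S.D * S.rho i j r t ≤ 10 * S.LT ^ ((1 : ℝ) / 3) := by
  have hD := S.D_pos
  have hL := F.two_le_LT
  have hq := S.one_le_cbrtMP
  have hTpos : (0 : ℝ) < S.T := by exact_mod_cast F.T_pos
  have hζ := hc.zeta_pos
  have hζ' := hc.zeta_le
  have hη := S.heta
  have hN := S.one_le_N
  have hC := hc.C_large
  obtain ⟨lam, hlam⟩ : ∃ lam, lam = S.LT ^ ((1 : ℝ) / 3) := ⟨_, rfl⟩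
  have hl1 : 1 ≤ lam := by rw [hlam]; exact Real.one_le_rpow (by linarith) (by norm_num)
  have hl3 : lam ^ 3 = S.LT := by rw [hlam]; exact rpow_third_cube (by linarith)
  have hl2 : lam ^ 2 ≤ S.LT := by rw [← hl3]; exact pow_le_pow_right₀ hl1 (by norm_num)
  have hlL : lam ≤ S.LT := by
    rw [← hl3]
    simpa using pow_le_pow_right₀ hl1 (show 1 ≤ 3 by norm_num)
  rw [← hlam]
  have key : ∀ t ≤ S.T, ∀ r i j, j ≠ S.sig i →
      S.D * S.rho i j r t ≤ 10 * lam * (3 / 4 + t / (4 * S.T)) := by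
    intro t
    induction t with
    | zero =>
      intro _ r i j _
      simp only [rho, mul_zero, Nat.cast_zero, zero_div, add_zero]
      positivity
    | succ t ih =>
      intro ht r i j hj
      have ih' := ih (by omega)
      have htT : (t : ℝ) + 1 ≤ S.T := by exact_mod_cast ht
      have hfrac : 3 / 4 + (t : ℝ) / (4 * S.T) ≤ 1 := by
        have : (t : ℝ) / (4 * S.T) ≤ 1 / 4 := by
          rw [div_le_div_iff₀ (by positivity) (by norm_num)]
          linarith
        linarith
      have hb : ∀ r k q, q ≠ S.sig k → S.D * S.rho k q r t ≤ 10 * lam := fun r k q hk =>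
        (ih' r k q hk).trans (mul_le_of_le_one_right (by positivity) hfrac)
      have happ : ∀ r k q, q ≠ S.sig k →
          |S.resp t k q r - S.rhoHat k q r t * sqnorm (S.x k q)| ≤ 10 * ζ / S.cbrtMP :=
        fun r k q hk => resp_of_rho_le hdyn hE F hc (by linarith) hlL (hb r) hk
      have hz : 11 * ζ / S.cbrtMP ≤ 1 / 100 := by
        rw [div_le_iff₀ (by positivity)]
        nlinarith
      have hz0 : 0 ≤ 11 * ζ / S.cbrtMP := by positivity
      obtain ⟨hlo, hup⟩ := resp_lower_of_approx hE F hc hj (happ r i j hj)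
      have hr := rho_nonneg i j r t
      have hDr : 0 ≤ S.D * S.rho i j r t := by positivity
      have hbi := hb r i j hj
      have hsq : S.resp t i j r ^ 2 ≤ (20 * lam) ^ 2 := by
        apply sq_le_sq'
        · linarith
        · linarith
      have hinc : S.D * S.rho i j r (t + 1) ≤
          S.D * S.rho i j r t + 1200 * (S.eta * S.D * S.LT) * psi (S.marg t i) := by
        rw [rho_succ, mul_add]
        have h1 : 3 * S.eta / S.N ≤ 3 * S.eta := div_le_self (by positivity) hN
        have hψ := (psi_pos (S.marg t i)).le
        have : (3 * S.eta / S.N) * psi (S.marg t i) * S.resp t i j r ^ 2 ≤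
            3 * S.eta * psi (S.marg t i) * (400 * S.LT) := by
          apply mul_le_mul _ _ (sq_nonneg _) (by positivity)
          · gcongr
          · calc S.resp t i j r ^ 2 ≤ (20 * lam) ^ 2 := hsq
              _ = 400 * lam ^ 2 := by ring
              _ ≤ 400 * S.LT := by gcongr
        have := mul_le_mul_of_nonneg_left this hD.le
        linarith
      have hηD : S.eta * S.D * S.LT ≤ 1 / 2000 := by
        have := F.eta_D
        have h0 : 0 ≤ S.eta * S.D * S.LT := by positivity
        nlinarith
      have hηD0 : 0 ≤ S.eta * S.D * S.LT := by positivity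
      rcases le_total (S.D * S.rho i j r t) (5 * lam) with hcase | hcase
      · have hψ := psi_le_one (S.marg t i)
        have h1 : 1200 * (S.eta * S.D * S.LT) * psi (S.marg t i) ≤ 1 := by
          calc 1200 * (S.eta * S.D * S.LT) * psi (S.marg t i)
              ≤ 1200 * (S.eta * S.D * S.LT) * 1 := by gcongr
            _ ≤ 1 := by linarith
        have h2 : 0 ≤ 10 * lam * (((t + 1 : ℕ) : ℝ) / (4 * S.T)) := by positivity
        rw [mul_add]
        linarith
      · have hm : S.LT ≤ S.marg t i := by
          have hlower : ∀ p r, p ≠ S.sig i → -((1 / 2) / S.cbrtMP) ≤ S.resp t i p r := by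
            intro p r hp
            have h1 := (resp_lower_of_approx hE F hc hp (happ r i p hp)).1
            have h2 : 0 ≤ S.D / 2 * S.rho i p r t := by
              have := rho_nonneg i p r t
              positivity
            have h3 : 11 * ζ / S.cbrtMP ≤ (1 / 2) / S.cbrtMP := by
              gcongr
              linarith
            linarith
          have h1 := marg_lower hdyn hE F (by linarith) hlower hj r
          have h2 : 2 * lam ≤ S.resp t i j r := by linarith
          have h3 := cube_le_cube h2
          have h4 : (2 * lam) ^ 3 = 8 * S.LT := by rw [← hl3]; ring
          linarith
        have hψ : psi (S.marg t i) ≤ 1 / S.T :=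
          (psi_anti hm).trans ((psi_le_exp_neg _).trans F.exp_le)
        have h1 : 1200 * (S.eta * S.D * S.LT) * psi (S.marg t i) ≤ 1 * (1 / S.T) := by
          gcongr
          · exact (psi_pos _).le
          · linarith
        have h2 := ih' r i j hj
        have h3 : 10 * lam * (3 / 4 + ((t + 1 : ℕ) : ℝ) / (4 * S.T)) =
            10 * lam * (3 / 4 + t / (4 * S.T)) + 5 / 2 * lam * (1 / S.T) := by
          push_cast
          field_simp
          ring
        have h4 : 1 * (1 / (S.T : ℝ)) ≤ 5 / 2 * lam * (1 / S.T) := by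
          gcongr
          linarith
        linarith
  intro t ht r i j hj
  refine (key t ht r i j hj).trans (mul_le_of_le_one_right (by positivity) ?_)
  have htT : (t : ℝ) ≤ S.T := by exact_mod_cast ht
  have : (t : ℝ) / (4 * S.T) ≤ 1 / 4 := by
    rw [div_le_div_iff₀ (by positivity) (by norm_num)]
    linarith
  linarith

lemma resp_approx_horizon (hdyn : S.ATDyn) (hE : S.EventE) (F : S.ParamFacts ζ C)
    (hc : SmallConst ζ C) {t : ℕ} (ht : t ≤ S.T) (r : Fin S.m) {i : Fin S.N} {j : Fin S.P}
    (hj : j ≠ S.sig i) :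
    |S.resp t i j r - S.rhoHat i j r t * sqnorm (S.x i j)| ≤ 10 * ζ / S.cbrtMP := by
  have hL := F.two_le_LT
  refine resp_of_rho_le hdyn hE F hc (Real.rpow_nonneg (by linarith) _) ?_
    (fun k q hk => rho_coarse hdyn hE F hc t ht r k q hk) hj
  simpa using Real.rpow_le_rpow_of_exponent_le (by linarith : 1 ≤ S.LT)
    (by norm_num : (1 : ℝ) / 3 ≤ 1)

lemma resp_lower_horizon (hdyn : S.ATDyn) (hE : S.EventE) (F : S.ParamFacts ζ C)
    (hc : SmallConst ζ C) {t : ℕ} (ht : t ≤ S.T) {i : Fin S.N} (p : Fin S.P) (r : Fin S.m)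
    (hp : p ≠ S.sig i) : -((1 / 2) / S.cbrtMP) ≤ S.resp t i p r := by
  have hq := S.one_le_cbrtMP
  have hD := S.D_pos
  have h1 := (resp_lower_of_approx hE F hc hp
    (resp_approx_horizon hdyn hE F hc ht r hp)).1
  have h2 : 0 ≤ S.D / 2 * S.rho i p r t := by
    have := rho_nonneg i p r t
    positivity
  have h3 : 11 * ζ / S.cbrtMP ≤ (1 / 2) / S.cbrtMP := by
    gcongr
    linarith [hc.zeta_le]
  linarith

variable {C0 C1 : ℝ}

/-! ### The early phase -/

/-- The lower bound for the noise-memorization time. -/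
def earlyTime (S : Setting) : ℝ := S.timeScale / (76800 * (S.L * Real.sqrt S.L))

lemma timeScale_pos (S : Setting) : 0 < S.timeScale := by
  have := S.heta
  have := S.hsigma0
  have := S.hsigman
  have := S.hd
  have := S.hN
  unfold timeScale
  positivity

lemma earlyTime_pos (F : S.ParamFacts ζ C) : 0 < S.earlyTime := by
  have := F.one_le_L
  have := S.timeScale_pos
  unfold earlyTime
  positivity

lemma one_le_earlyTime (F : S.ParamFacts ζ C) : 1 ≤ S.earlyTime := by
  have := F.one_le_L
  unfold earlyTime
  rw [one_le_div (by positivity)]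
  exact F.scale_large

lemma ceil_earlyTime_le (F : S.ParamFacts ζ C) :
    ((⌈S.earlyTime⌉₊ : ℕ) : ℝ) ≤ 2 * S.earlyTime := by
  have h := one_le_earlyTime F
  have := Nat.ceil_lt_add_one (by linarith : 0 ≤ S.earlyTime)
  linarith

lemma early_le_horizon (F : S.ParamFacts ζ C) (hc : SmallConst ζ C) {t : ℕ}
    (ht : (t : ℝ) ≤ 2 * S.earlyTime) : t ≤ S.T := by
  have h1 := F.one_le_L
  have h2 := S.timeScale_pos
  have hs : 1 ≤ Real.sqrt S.L := Real.one_le_sqrt.2 h1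
  have h3 : S.earlyTime ≤ S.timeScale := by
    unfold earlyTime
    exact div_le_self h2.le (by nlinarith)
  have h4 : (2000 : ℝ) * S.timeScale ≤ C * S.timeScale := by
    have := hc.C_large
    gcongr
  have h5 := F.scale_le_T
  have : (t : ℝ) ≤ S.T := by linarith
  exact_mod_cast this

lemma eta_earlyTime (F : S.ParamFacts ζ C) :
    S.eta / S.N * S.earlyTime *
      (S.sigma0 * S.sigman ^ 3 * (S.d * Real.sqrt S.d)) * (76800 * (S.L * Real.sqrt S.L)) = 1 := by
  have := S.heta
  have := S.hsigma0
  have := S.hsigman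
  have hd : (0 : ℝ) < S.d := by exact_mod_cast S.hd
  have hN : (0 : ℝ) < S.N := by exact_mod_cast S.hN
  have := F.one_le_L
  have : 0 < Real.sqrt S.d := Real.sqrt_pos.2 hd
  have : 0 < Real.sqrt S.L := Real.sqrt_pos.2 (by linarith)
  unfold earlyTime timeScale
  field_simp

lemma eta_earlyTime_A0 (F : S.ParamFacts ζ C) :
    S.eta / S.N * S.earlyTime * S.A0 * (38400 * S.D * S.L) = 1 := by
  have hL := F.one_le_L
  have h := eta_earlyTime F
  have hA : S.A0 = 2 * S.sigma0 * S.sigman * (Real.sqrt S.d * Real.sqrt S.L) := by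
    rw [A0, Real.sqrt_mul (by positivity)]
  rw [hA, D]
  linear_combination h

lemma abs_resp_le_of_rho_early (hdyn : S.ATDyn) (hE : S.EventE) (F : S.ParamFacts ζ C)
    (hc : SmallConst ζ C) {t : ℕ} {r : Fin S.m}
    (h : ∀ k q, q ≠ S.sig k → S.rho k q r t ≤ S.A0 / (1600 * S.D))
    {i : Fin S.N} {j : Fin S.P} (hj : j ≠ S.sig i) :
    |S.resp t i j r| ≤ 2 * S.A0 := by
  have hD := S.D_pos
  have hA := S.A0_nonneg
  have hq := S.one_le_cbrtMP
  have hL := F.two_le_LT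
  have hζ := hc.zeta_pos
  have hζ' := hc.zeta_le
  have h1 := resp_approx hdyn hE (by positivity) h hj
  have h2 := cross_le F (b := S.A0 / (1600 * S.D)) (B := S.A0) (by positivity)
    (by rw [mul_div_assoc', div_le_iff₀ (by positivity)]; nlinarith [mul_nonneg hA hD.le])
    hζ.le
  have h3 : ζ * S.A0 / (S.cbrtMP * S.LT) ≤ S.A0 / 4 := by
    rw [div_le_div_iff₀ (by positivity) (by norm_num)]
    have h5 : ζ * 4 ≤ S.cbrtMP * S.LT := by nlinarith
    nlinarith [mul_le_mul_of_nonneg_left h5 hA]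
  rw [rhoHat_mul_sqnorm hE hj] at h1
  have h4 := abs_le.1 (h1.trans (h2.trans h3))
  have h0 := abs_le.1 (abs_resp_zero_le hE hj r)
  have hn := sqnorm_bounds hE hj
  have hr := rho_nonneg i j r t
  have h5 : S.rho i j r t * sqnorm (S.x i j) ≤ S.A0 / (1600 * S.D) * (3 * S.D / 2) :=
    mul_le_mul (h i j hj) hn.2 (by linarith [hn.1]) (by positivity)
  have h6 : S.A0 / (1600 * S.D) * (3 * S.D / 2) ≤ S.A0 / 4 := by
    have : S.A0 / (1600 * S.D) * (3 * S.D / 2) = S.A0 * (3 / 3200) := by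
      field_simp
      ring
    rw [this]
    linarith
  have h7 : 0 ≤ S.rho i j r t * sqnorm (S.x i j) := mul_nonneg hr (by linarith [hn.1])
  rw [abs_le]
  constructor <;> linarith [h0.1, h0.2, h4.1, h4.2]

lemma rho_early (hdyn : S.ATDyn) (hE : S.EventE) (F : S.ParamFacts ζ C)
    (hc : SmallConst ζ C) :
    ∀ t : ℕ, (t : ℝ) ≤ 2 * S.earlyTime → ∀ r i j, j ≠ S.sig i →
      S.rho i j r t ≤ S.A0 / (1600 * S.D) := by
  have hD := S.D_pos
  have hA := S.A0_nonneg
  have hη := S.heta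
  have hN := S.one_le_N
  have hL := F.one_le_L
  have hbound : ∀ t : ℕ, (t : ℝ) ≤ 2 * S.earlyTime →
      t * (12 * S.eta / S.N * S.A0 ^ 2) ≤ S.A0 / (1600 * S.D) := by
    intro t ht
    have h := eta_earlyTime_A0 F
    calc t * (12 * S.eta / S.N * S.A0 ^ 2)
        ≤ 2 * S.earlyTime * (12 * S.eta / S.N * S.A0 ^ 2) := by gcongr
      _ = 24 * S.A0 * (S.eta / S.N * S.earlyTime * S.A0) := by ring
      _ = 24 * S.A0 * (1 / (38400 * S.D * S.L)) := by
          rw [eq_div_of_mul_eq (by positivity) h]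
      _ = S.A0 / (1600 * S.D) * (1 / S.L) := by
          field_simp
          ring
      _ ≤ S.A0 / (1600 * S.D) * 1 := by
          gcongr
          rw [div_le_one (by linarith)]
          exact hL
      _ = _ := mul_one _
  have key : ∀ t : ℕ, (t : ℝ) ≤ 2 * S.earlyTime → ∀ r i j, j ≠ S.sig i →
      S.rho i j r t ≤ t * (12 * S.eta / S.N * S.A0 ^ 2) := by
    intro t
    induction t with
    | zero => intro _ r i j _; simp [rho]
    | succ t ih =>
      intro ht r i j hj
      have ht' : (t : ℝ) ≤ 2 * S.earlyTime := by push_cast at ht; linarith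
      have h1 := ih ht'
      have h2 := abs_resp_le_of_rho_early hdyn hE F hc
        (fun k q hk => (h1 r k q hk).trans (hbound t ht')) hj
      have h3 : S.resp t i j r ^ 2 ≤ (2 * S.A0) ^ 2 := by
        rw [← sq_abs]
        gcongr
      rw [rho_succ]
      have h4 : 3 * S.eta / S.N * psi (S.marg t i) * S.resp t i j r ^ 2 ≤
          3 * S.eta / S.N * 1 * (2 * S.A0) ^ 2 := by
        have := (psi_pos (S.marg t i)).le
        have := psi_le_one (S.marg t i)
        gcongr
      have h5 := h1 r i j hj
      push_cast
      have e : 3 * S.eta / S.N * 1 * (2 * S.A0) ^ 2 = 12 * S.eta / S.N * S.A0 ^ 2 := by ring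
      rw [e] at h4
      linarith
  exact fun t ht r i j hj => (key t ht r i j hj).trans (hbound t ht)

lemma abs_resp_early (hdyn : S.ATDyn) (hE : S.EventE) (F : S.ParamFacts ζ C)
    (hc : SmallConst ζ C) {t : ℕ} (ht : (t : ℝ) ≤ 2 * S.earlyTime) (r : Fin S.m)
    {i : Fin S.N} {j : Fin S.P} (hj : j ≠ S.sig i) : |S.resp t i j r| ≤ 2 * S.A0 :=
  abs_resp_le_of_rho_early hdyn hE F hc (fun k q hk => rho_early hdyn hE F hc t ht r k q hk) hj

lemma noise_cubes_early (hdyn : S.ATDyn) (hE : S.EventE) (F : S.ParamFacts ζ C)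
    (hc : SmallConst ζ C) {t : ℕ} (ht : (t : ℝ) ≤ 2 * S.earlyTime) (i : Fin S.N) :
    ∑ r, ∑ p ∈ S.noiseIdx i, S.resp t i p r ^ 3 ≤ 1 := by
  have h := noise_cubes_upper (S := S) (t := t) (i := i) (b := 1) (by norm_num) fun p r hp => by
    have h1 := (abs_le.1 (abs_resp_early hdyn hE F hc ht r hp)).2
    have h2 := A0_le_div F (by linarith [hc.C_large]) hc.C_zeta
    have hq := S.one_le_cbrtMP
    have h3 : 2 * (ζ / S.cbrtMP) ≤ 1 / S.cbrtMP := by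
      rw [mul_div_assoc']
      gcongr
      linarith [hc.zeta_le]
    linarith
  simpa using h

lemma alpha_sub_eps_cube (F : S.ParamFacts ζ C) (hc : SmallConst ζ C) :
    S.alpha ^ 3 ≤ 2 * (S.alpha - S.eps) ^ 3 := by
  have h1 := F.eps_le
  have hε := S.heps
  have hα := S.halpha
  have h2 : 2000 * S.eps ≤ S.alpha := by nlinarith [hc.C_large]
  have h3 : (9 / 10 * S.alpha) ^ 3 ≤ (S.alpha - S.eps) ^ 3 := cube_le_cube (by linarith)
  nlinarith [pow_pos hα 3]

/-- Signal learning is fast: the margins of the learnable samples cannot all stay below `V`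
during the early phase. -/
lemma signal_escape (hdyn : S.ATDyn) (hE : S.EventE) (F : S.ParamFacts ζ C)
    (hc : SmallConst ζ C) {V K : ℝ} (hK : 1 ≤ K) (hV : 0 ≤ V) (hVK : 1 + Real.exp V ≤ K * S.L)
    (hKC : 300000 * K ≤ C) :
    ∃ τ < ⌈S.earlyTime⌉₊, ∃ i ∈ S.SL, V < S.marg τ i := by
  by_contra! hcon
  obtain ⟨r, hr⟩ := exists_wsig_zero hE
  obtain ⟨i₀, hi₀⟩ := F.SL_nonempty
  have hσ := S.hsigma0
  have hσn := S.hsigman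
  have hη := S.heta
  have hα := S.halpha
  have hN := S.one_le_N
  have hLT := F.two_le_LT
  have hL := F.one_le_L
  have hLL := F.L_le
  have hae : 0 < S.alpha - S.eps := by linarith [S.hepsalpha]
  have hSL : (0 : ℝ) < S.SL.card := by exact_mod_cast Finset.card_pos.2 F.SL_nonempty
  have hSLN : (S.SL.card : ℝ) ≤ S.N := by
    exact_mod_cast (Finset.card_le_univ S.SL).trans (by simp)
  have hg0 : ∀ t, 0 < S.wsig t r := fun t =>
    lt_of_lt_of_le (by linarith) (wsig_mono hdyn r (Nat.zero_le t))
  obtain ⟨c, hcdef⟩ : ∃ c, c = 3 * S.eta / S.N *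
      (S.SL.card * (S.alpha - S.eps) ^ 3) / (1 + Real.exp V) := ⟨_, rfl⟩
  have hcpos : 0 < c := by rw [hcdef]; positivity
  have hstep : ∀ t < ⌈S.earlyTime⌉₊,
      S.wsig t r + c * S.wsig t r ^ 2 ≤ S.wsig (t + 1) r := by
    intro t ht
    rw [wsig_succ hdyn]
    have h1 : S.SL.card * ((1 / (1 + Real.exp V)) * (S.alpha - S.eps) ^ 3) ≤
        ∑ i ∈ S.SL, psi (S.marg t i) * S.asig t i ^ 3 := by
      rw [← nsmul_eq_mul]
      refine Finset.card_nsmul_le_sum _ _ _ fun i hi => ?_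
      have h2 : psi V ≤ psi (S.marg t i) := psi_anti (hcon t ht i hi)
      have h3 := cube_le_cube (asig_bounds t hi).1
      exact mul_le_mul h2 h3 (by positivity) (psi_pos _).le
    have h2 : c ≤ 3 * S.eta / S.N * ∑ i ∈ S.SL, psi (S.marg t i) * S.asig t i ^ 3 := by
      have := mul_le_mul_of_nonneg_left h1 S.step_nonneg
      refine le_trans (le_of_eq ?_) this
      rw [hcdef]
      ring
    have := mul_le_mul_of_nonneg_right h2 (sq_nonneg (S.wsig t r))
    linarith
  have hearly : ∀ t < ⌈S.earlyTime⌉₊, (t : ℝ) ≤ 2 * S.earlyTime := fun t ht => by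
    have h1 : (t : ℝ) ≤ (⌈S.earlyTime⌉₊ : ℕ) := by exact_mod_cast ht.le
    exact h1.trans (ceil_earlyTime_le F)
  have hle : ∀ t < ⌈S.earlyTime⌉₊, c * S.wsig t r ≤ 1 := by
    intro t ht
    have hT := early_le_horizon F hc (hearly t ht)
    have h1 := signal_cubes_lower hdyn hE F (by linarith [hc.C_large]) t hi₀ r
    obtain ⟨p, hp⟩ := exists_noise_patch F i₀
    have h2 := noise_cubes_lower (by norm_num)
      (fun p r hp => resp_lower_horizon hdyn hE F hc hT (i := i₀) p r hp) hp r
    have h2' : -(1 / 2) ^ 3 ≤ S.resp t i₀ p r ^ 3 := by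
      refine neg_cube_le_cube ((neg_le_neg ?_).trans
        (resp_lower_horizon hdyn hE F hc hT (i := i₀) p r hp))
      exact div_le_self (by norm_num) S.one_le_cbrtMP
    have h3 := hcon t ht i₀ hi₀
    rw [S.marg_SL t hi₀] at h3
    have h4 : (S.asig t i₀ * S.wsig t r) ^ 3 ≤ V + 1 := by linarith
    have h5 : (S.alpha - S.eps) * S.wsig t r ≤ V + 1 := by
      by_contra! h6
      have h7 : (V + 1) ^ 3 < ((S.alpha - S.eps) * S.wsig t r) ^ 3 :=
        (Odd.strictMono_pow (by decide : Odd 3)) h6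
      have h8 : ((S.alpha - S.eps) * S.wsig t r) ^ 3 ≤ (S.asig t i₀ * S.wsig t r) ^ 3 :=
        cube_le_cube (mul_le_mul_of_nonneg_right (asig_bounds t hi₀).1 (hg0 t).le)
      have h9 : V + 1 ≤ (V + 1) ^ 3 := le_self_pow₀ (by linarith) (by norm_num)
      linarith
    have h6 : V + 1 ≤ K * S.LT := by
      have h7 := Real.add_one_le_exp V
      have h8 : K * S.L ≤ K * S.LT := by gcongr
      linarith
    have hc1 : c ≤ 3 * S.eta * (S.alpha - S.eps) ^ 3 := by
      rw [hcdef]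
      have h7 : 3 * S.eta / S.N * (S.SL.card * (S.alpha - S.eps) ^ 3) ≤
          3 * S.eta * (S.alpha - S.eps) ^ 3 := by
        calc 3 * S.eta / S.N * (S.SL.card * (S.alpha - S.eps) ^ 3)
            ≤ 3 * S.eta / S.N * (S.N * (S.alpha - S.eps) ^ 3) := by gcongr
          _ = 3 * S.eta * (S.alpha - S.eps) ^ 3 := by field_simp
      refine (div_le_self (by positivity) ?_).trans h7
      linarith [Real.exp_pos V]
    have hsq : (S.alpha - S.eps) ^ 2 ≤ S.alpha ^ 2 := by
      have := S.heps
      gcongr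
      linarith
    calc c * S.wsig t r ≤ 3 * S.eta * (S.alpha - S.eps) ^ 3 * S.wsig t r :=
          mul_le_mul_of_nonneg_right hc1 (hg0 t).le
      _ = 3 * S.eta * (S.alpha - S.eps) ^ 2 * ((S.alpha - S.eps) * S.wsig t r) := by ring
      _ ≤ 3 * S.eta * S.alpha ^ 2 * (K * S.LT) := by
          have := h5.trans h6
          gcongr
          exact mul_nonneg hae.le (hg0 t).le
      _ = (3 * K) * (S.eta * S.alpha ^ 2 * S.LT) := by ring
      _ ≤ C * (S.eta * S.alpha ^ 2 * S.LT) := by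
          gcongr
          linarith
      _ ≤ 1 := F.eta_alpha
  have hfin := quadratic_growth_time (a := fun t => S.wsig t r) hcpos (hg0 0) hstep hle
  have hceil : S.earlyTime ≤ (⌈S.earlyTime⌉₊ : ℕ) := Nat.le_ceil _
  have hX := earlyTime_pos F
  have h1 : S.earlyTime * c * (S.sigma0 / 2) < 2 := by
    refine lt_of_le_of_lt ?_ hfin
    gcongr
  have hA := alpha_sub_eps_cube F hc
  have hsig := F.signal
  have he := eta_earlyTime F
  have hs1 : 1 ≤ Real.sqrt S.L := Real.one_le_sqrt.2 hL
  have hs2 : Real.sqrt S.L ≤ S.LT := (Real.sqrt_le_left (by linarith)).2 (by nlinarith)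
  have hd : (0 : ℝ) < S.d := by exact_mod_cast S.hd
  have hsd : 0 < Real.sqrt S.d := Real.sqrt_pos.2 hd
  have hηX : 0 < S.eta / S.N * S.earlyTime := by positivity
  have h2 : 3 * (S.eta / S.N * S.earlyTime) * S.sigma0 * (S.SL.card * (S.alpha - S.eps) ^ 3) <
      4 * (K * S.L) := by
    have e : S.earlyTime * c * (S.sigma0 / 2) * (1 + Real.exp V) =
        3 / 2 * (S.eta / S.N * S.earlyTime) * S.sigma0 *
          (S.SL.card * (S.alpha - S.eps) ^ 3) := by
      rw [hcdef]
      field_simp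
    have h3 : S.earlyTime * c * (S.sigma0 / 2) * (1 + Real.exp V) < 2 * (1 + Real.exp V) :=
      mul_lt_mul_of_pos_right h1 (by positivity)
    rw [e] at h3
    linarith
  have h3 : (S.eta / S.N * S.earlyTime) * S.sigma0 *
      (C ^ 3 * S.sigman ^ 3 * (S.d * Real.sqrt S.d) * S.LT ^ 3) ≤
      2 * ((S.eta / S.N * S.earlyTime) * S.sigma0 * (S.SL.card * (S.alpha - S.eps) ^ 3)) := by
    have h4 : S.alpha ^ 3 * S.SL.card ≤ 2 * (S.SL.card * (S.alpha - S.eps) ^ 3) := by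
      nlinarith
    calc _ ≤ (S.eta / S.N * S.earlyTime) * S.sigma0 *
        (2 * (S.SL.card * (S.alpha - S.eps) ^ 3)) :=
          mul_le_mul_of_nonneg_left (hsig.trans h4) (by positivity)
      _ = _ := by ring
  obtain ⟨Y, hY⟩ : ∃ Y, Y = S.eta / S.N * S.earlyTime *
      (S.sigma0 * S.sigman ^ 3 * (S.d * Real.sqrt S.d)) := ⟨_, rfl⟩
  have hYpos : 0 < Y := by rw [hY]; positivity
  rw [← hY] at he
  have h5 : Y * (C ^ 3 * S.LT ^ 3) ≤ 3 * (K * S.L) := by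
    have : Y * (C ^ 3 * S.LT ^ 3) = (S.eta / S.N * S.earlyTime) * S.sigma0 *
      (C ^ 3 * S.sigman ^ 3 * (S.d * Real.sqrt S.d) * S.LT ^ 3) := by rw [hY]; ring
    rw [this]
    have hKL : 0 < K * S.L := by positivity
    linarith
  have hCpos : 0 < C := by linarith
  have h6 : C ^ 3 * S.LT ^ 3 ≤ 3 * (K * S.L) * (76800 * (S.L * Real.sqrt S.L)) := by
    calc C ^ 3 * S.LT ^ 3
        = Y * (C ^ 3 * S.LT ^ 3) * (76800 * (S.L * Real.sqrt S.L)) := by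
          rw [mul_right_comm, he, one_mul]
      _ ≤ _ := by gcongr
  have h7 : 3 * (K * S.L) * (76800 * (S.L * Real.sqrt S.L)) ≤
      230400 * K * S.LT ^ 3 := by
    calc 3 * (K * S.L) * (76800 * (S.L * Real.sqrt S.L))
        ≤ 3 * (K * S.LT) * (76800 * (S.LT * S.LT)) := by gcongr
      _ = 230400 * K * S.LT ^ 3 := by ring
  have h8 : C ≤ C ^ 3 := le_self_pow₀ (by linarith) (by norm_num)
  have h9 : 300000 * K * S.LT ^ 3 ≤ C ^ 3 * S.LT ^ 3 := by
    gcongr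
    linarith
  have h10 : 0 < K * S.LT ^ 3 := by positivity
  linarith

/-! ### Signal learning -/

lemma T0_lt_ceil (hdyn : S.ATDyn) (hE : S.EventE) (F : S.ParamFacts ζ C)
    (hc : SmallConst ζ C) (hC0 : 0 < C0) (hC : 300000 * (1 + Real.exp (C0 ^ 3 + 1)) ≤ C) :
    S.T0 C0 < ⌈S.earlyTime⌉₊ := by
  by_contra! hcon
  have hα := S.halpha
  have hμ := S.one_le_cbrtM
  have hL := F.one_le_L
  have hno : ∀ τ < ⌈S.earlyTime⌉₊, ∀ r, S.wsig τ r ≤ C0 / (S.alpha * S.cbrtM) := by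
    intro τ hτ r
    by_contra! hlt
    exact absurd (Nat.sInf_le (show τ ∈ {t : ℕ | ∃ r, C0 / (S.alpha *
      (S.m : ℝ) ^ ((1 : ℝ) / 3)) < S.wsig t r} from ⟨r, hlt⟩)) (by
        have : τ < S.T0 C0 := lt_of_lt_of_le hτ hcon
        exact not_le.2 this)
  have hV : 1 + Real.exp (C0 ^ 3 + 1) ≤ (1 + Real.exp (C0 ^ 3 + 1)) * S.L :=
    le_mul_of_one_le_right (by positivity) hL
  obtain ⟨τ, hτ, i, hi, hm⟩ := signal_escape hdyn hE F hc
    (by linarith [Real.exp_pos (C0 ^ 3 + 1)]) (by positivity) hV hC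
  have hearly : (τ : ℝ) ≤ 2 * S.earlyTime := by
    have h1 : (τ : ℝ) ≤ (⌈S.earlyTime⌉₊ : ℕ) := by exact_mod_cast hτ.le
    exact h1.trans (ceil_earlyTime_le F)
  rw [S.marg_SL τ hi] at hm
  have h1 := noise_cubes_early hdyn hE F hc hearly i
  have h2 : ∑ r, S.wsig τ r ^ 3 ≤ (C0 / S.alpha) ^ 3 := by
    calc ∑ r, S.wsig τ r ^ 3 ≤ ∑ r : Fin S.m, (C0 / (S.alpha * S.cbrtM)) ^ 3 :=
          Finset.sum_le_sum fun r _ => cube_le_cube (hno τ hτ r)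
      _ = S.m * (C0 / (S.alpha * S.cbrtM)) ^ 3 := by simp
      _ = S.cbrtM ^ 3 * (C0 / (S.alpha * S.cbrtM)) ^ 3 := by rw [cbrtM_cube]
      _ = (C0 / S.alpha) ^ 3 := by field_simp
  have h3 : S.asig τ i ^ 3 * ∑ r, S.wsig τ r ^ 3 ≤ C0 ^ 3 := by
    have ha := asig_pos τ hi
    calc S.asig τ i ^ 3 * ∑ r, S.wsig τ r ^ 3 ≤ S.asig τ i ^ 3 * (C0 / S.alpha) ^ 3 := by gcongr
      _ ≤ S.alpha ^ 3 * (C0 / S.alpha) ^ 3 := by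
          have := (asig_bounds τ hi).2
          gcongr
      _ = C0 ^ 3 := by field_simp
  linarith

/-- After the early phase the gradient weights of learnable samples are uniformly small. -/
lemma psi_learnable_le (hdyn : S.ATDyn) (hE : S.EventE) (F : S.ParamFacts ζ C)
    (hc : SmallConst ζ C) {K : ℝ} (hK : 1 ≤ K) (hKC : 300000 * (22 * K ^ 2) ≤ C)
    {t : ℕ} (ht : ⌈S.earlyTime⌉₊ ≤ t) (htT : t ≤ S.T) {k : Fin S.N} (hk : k ∈ S.SL) :
    psi (S.marg t k) ≤ 1 / (K * Real.sqrt S.L) := by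
  by_contra! hcon
  have hL := F.one_le_L
  have hs1 : 1 ≤ Real.sqrt S.L := Real.one_le_sqrt.2 hL
  have hKs : 1 ≤ K * Real.sqrt S.L := by nlinarith
  obtain ⟨B, hB⟩ : ∃ B, B = Real.log (K * Real.sqrt S.L) := ⟨_, rfl⟩
  have hB0 : 0 ≤ B := by rw [hB]; exact Real.log_nonneg hKs
  have hexpB : Real.exp B = K * Real.sqrt S.L := by
    rw [hB, Real.exp_log (by linarith)]
  have hmB : S.marg t k < B := by
    have h1 := hcon.trans_le (psi_le_exp_neg (S.marg t k))
    rw [← hexpB, one_div, ← Real.exp_neg, Real.exp_lt_exp] at h1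
    linarith
  have hV : 1 + Real.exp (2 * B + 3) ≤ 22 * K ^ 2 * S.L := by
    have e1 : Real.exp (2 * B + 3) = Real.exp B ^ 2 * Real.exp 1 ^ 3 := by
      rw [Real.exp_add, ← Real.exp_nat_mul, ← Real.exp_nat_mul]
      norm_num
    have e2 : Real.exp 1 ^ 3 ≤ 21 := by
      have := Real.exp_one_lt_d9.le
      calc Real.exp 1 ^ 3 ≤ 2.7182818286 ^ 3 := by gcongr
        _ ≤ 21 := by norm_num
    have e3 : Real.exp B ^ 2 = K ^ 2 * S.L := by
      rw [hexpB, mul_pow, Real.sq_sqrt (by linarith)]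
    rw [e1, e3]
    have h1 : 1 ≤ K ^ 2 * S.L := by nlinarith
    have h2 : K ^ 2 * S.L * Real.exp 1 ^ 3 ≤ K ^ 2 * S.L * 21 := by gcongr
    linarith
  obtain ⟨τ, hτ, i, hi, hm⟩ := signal_escape hdyn hE F hc (K := 22 * K ^ 2) (by nlinarith)
    (by positivity) hV hKC
  have hearly : (τ : ℝ) ≤ 2 * S.earlyTime := by
    have h1 : (τ : ℝ) ≤ (⌈S.earlyTime⌉₊ : ℕ) := by exact_mod_cast hτ.le
    exact h1.trans (ceil_earlyTime_le F)
  have h1 := noise_cubes_early hdyn hE F hc hearly i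
  rw [S.marg_SL τ hi] at hm
  rw [S.marg_SL t hk] at hmB
  obtain ⟨p, hp⟩ := exists_noise_patch F k
  have hm0 : 0 < S.m := S.hm
  have h2 := noise_cubes_lower (by norm_num)
    (fun p r hp => resp_lower_horizon hdyn hE F hc htT (i := k) p r hp) hp ⟨0, hm0⟩
  have h2' : -(1 / 2) ^ 3 ≤ S.resp t k p ⟨0, hm0⟩ ^ 3 := by
    refine neg_cube_le_cube ((neg_le_neg ?_).trans
      (resp_lower_horizon hdyn hE F hc htT (i := k) p ⟨0, hm0⟩ hp))
    exact div_le_self (by norm_num) S.one_le_cbrtMP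
  have hmono : ∑ r, S.wsig τ r ^ 3 ≤ ∑ r, S.wsig t r ^ 3 :=
    Finset.sum_le_sum fun r _ => cube_le_cube (wsig_mono hdyn r (hτ.le.trans ht))
  have h3 : S.asig t k ^ 3 * ∑ r, S.wsig t r ^ 3 ≤ B + 1 := by linarith
  have h4 : S.asig τ i ^ 3 * ∑ r, S.wsig τ r ^ 3 ≤ 2 * (B + 1) := by
    have hai := asig_pos τ hi
    rcases le_total (∑ r, S.wsig t r ^ 3) 0 with hn | hn
    · have := mul_nonpos_of_nonneg_of_nonpos (pow_pos hai 3).le (hmono.trans hn)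
      linarith
    · calc S.asig τ i ^ 3 * ∑ r, S.wsig τ r ^ 3 ≤ S.asig τ i ^ 3 * ∑ r, S.wsig t r ^ 3 := by gcongr
        _ ≤ S.alpha ^ 3 * ∑ r, S.wsig t r ^ 3 := by
            have := (asig_bounds τ hi).2
            gcongr
        _ ≤ 2 * S.asig t k ^ 3 * ∑ r, S.wsig t r ^ 3 := by
            gcongr
            have h5 := alpha_sub_eps_cube F hc
            have h6 := cube_le_cube (asig_bounds t hk).1
            linarith
        _ ≤ 2 * (B + 1) := by linarith
  linarith

/-! ### Noise memorization -/

/-- The threshold defining the noise-memorization time. -/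
def memThreshold (S : Setting) (C1 : ℝ) : ℝ := C1 / (S.cbrtMP * S.D)

/-- All shifted noise coefficients of unlearnable samples are below the threshold. -/
def NotMemorized (S : Setting) (C1 : ℝ) (t : ℕ) : Prop :=
  ∀ r, ∀ k ∈ S.SU, ∀ q, q ≠ S.sig k → S.rhoHat k q r t ≤ S.memThreshold C1

lemma T1_eq (S : Setting) (C1 : ℝ) :
    S.T1 C1 = sInf {t : ℕ | S.memThreshold C1 < S.rhoHatMax t} := by
  unfold T1 memThreshold D cbrtMP
  simp_rw [mul_assoc]

lemma rhoHat_le_rhoHatMax (t : ℕ) (r : Fin S.m) {k : Fin S.N} (hk : k ∈ S.SU) {q : Fin S.P}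
    (hq : q ≠ S.sig k) : S.rhoHat k q r t ≤ S.rhoHatMax t := by
  refine le_csSup (Set.Finite.bddAbove ?_) ⟨r, k, hk, q, hq, rfl⟩
  refine (Set.finite_range fun a : Fin S.m × Fin S.N × Fin S.P =>
    S.rhoHat a.2.1 a.2.2 a.1 t).subset ?_
  rintro z ⟨r, k, _, q, _, rfl⟩
  exact ⟨(r, k, q), rfl⟩

lemma notMemorized_iff (F : S.ParamFacts ζ C) (t : ℕ) :
    S.NotMemorized C1 t ↔ S.rhoHatMax t ≤ S.memThreshold C1 := by
  constructor
  · intro h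
    obtain ⟨k, hk⟩ := F.SU_nonempty
    obtain ⟨q, hq⟩ := exists_noise_patch F k
    refine csSup_le ⟨_, ⟨0, S.hm⟩, k, hk, q, hq, rfl⟩ ?_
    rintro z ⟨r, k, hk, q, hq, rfl⟩
    exact h r k hk q hq
  · exact fun h r k hk q hq => (rhoHat_le_rhoHatMax t r hk hq).trans h

lemma memThreshold_pos (hC1 : 0 < C1) : 0 < S.memThreshold C1 := by
  have := S.one_le_cbrtMP
  have := S.D_pos
  unfold memThreshold
  positivity

lemma notMemorized_early (hdyn : S.ATDyn) (hE : S.EventE) (F : S.ParamFacts ζ C)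
    (hc : SmallConst ζ C) (hζ : 125 * ζ ≤ C1) {t : ℕ} (ht : (t : ℝ) ≤ 2 * S.earlyTime) :
    S.NotMemorized C1 t := by
  intro r k _ q hq
  have hD := S.D_pos
  have hA := S.A0_nonneg
  have hcb := S.one_le_cbrtMP
  have h1 := rho_early hdyn hE F hc t ht r k q hq
  have h2 := (abs_le.1 (abs_resp_zero_le hE hq r)).2
  have hn := (sqnorm_bounds hE hq).1
  have hA' := A0_le_div F (by linarith [hc.C_large]) hc.C_zeta
  have h3 : S.y k * dot (S.w 0 r) (S.x k q) / sqnorm (S.x k q) ≤ S.A0 / (S.D / 2) := by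
    calc S.y k * dot (S.w 0 r) (S.x k q) / sqnorm (S.x k q)
        ≤ S.A0 / sqnorm (S.x k q) := div_le_div_of_nonneg_right h2 (by linarith)
      _ ≤ S.A0 / (S.D / 2) := by gcongr
  have h4 : S.A0 / (1600 * S.D) + S.A0 / (S.D / 2) ≤ 3 * S.A0 / S.D := by
    have : S.A0 / (1600 * S.D) + S.A0 / (S.D / 2) = (1 / 1600 + 2) * S.A0 / S.D := by
      field_simp
    rw [this]
    gcongr
    norm_num
  have h5 : 3 * S.A0 / S.D ≤ S.memThreshold C1 := by
    have h6 : 3 * S.A0 ≤ C1 / S.cbrtMP := by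
      have : 3 * (ζ / S.cbrtMP) ≤ C1 / S.cbrtMP := by
        rw [mul_div_assoc']
        gcongr
        linarith [hc.zeta_pos]
      linarith
    calc 3 * S.A0 / S.D ≤ C1 / S.cbrtMP / S.D := by gcongr
      _ = S.memThreshold C1 := by rw [memThreshold, div_div]
  rw [rhoHat]
  linarith

/-- Before memorization the gradient weights of unlearnable samples are bounded below. -/
lemma psi_unlearnable_ge (hdyn : S.ATDyn) (hE : S.EventE) (F : S.ParamFacts ζ C)
    (hc : SmallConst ζ C) (hC1 : 0 < C1) (hζ : 125 * ζ ≤ C1) {t : ℕ} (htT : t ≤ S.T)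
    (hnot : S.NotMemorized C1 t) {k : Fin S.N} (hk : k ∈ S.SU) :
    1 / (1 + Real.exp (4 * C1 ^ 3)) ≤ psi (S.marg t k) := by
  have hD := S.D_pos
  have hcb := S.one_le_cbrtMP
  have hm : S.marg t k ≤ 4 * C1 ^ 3 := by
    rw [S.marg_SU t hk]
    have h := noise_cubes_upper (S := S) (t := t) (i := k) (b := 79 / 50 * C1) (by positivity)
      fun p r hp => by
        have h1 := (abs_le.1 (resp_approx_horizon hdyn hE F hc htT r hp)).2
        have hn := sqnorm_bounds hE hp
        have h2 : S.rhoHat k p r t * sqnorm (S.x k p) ≤ 3 / 2 * C1 / S.cbrtMP := by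
          calc S.rhoHat k p r t * sqnorm (S.x k p)
              ≤ S.memThreshold C1 * sqnorm (S.x k p) :=
                mul_le_mul_of_nonneg_right (hnot r k hk p hp) (by linarith [hn.1])
            _ ≤ S.memThreshold C1 * (3 * S.D / 2) :=
                mul_le_mul_of_nonneg_left hn.2 (memThreshold_pos hC1).le
            _ = 3 / 2 * C1 / S.cbrtMP := by
                unfold memThreshold
                field_simp
        have h3 : 10 * ζ / S.cbrtMP ≤ 2 / 25 * C1 / S.cbrtMP :=
          div_le_div_of_nonneg_right (by linarith) (by linarith [S.one_le_cbrtMP])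
        have e : 79 / 50 * C1 / S.cbrtMP = 3 / 2 * C1 / S.cbrtMP + 2 / 25 * C1 / S.cbrtMP := by
          ring
        rw [e]
        linarith
    have h2 : 0 < C1 ^ 3 := by positivity
    rw [mul_pow] at h
    linarith
  exact psi_anti hm

/-- Initial noise scale `σ₀ σ_n √d`. -/
def omega (S : Setting) : ℝ := S.sigma0 * S.sigman * Real.sqrt S.d

lemma omega_pos (S : Setting) : 0 < S.omega := by
  have := S.hsigma0
  have := S.hsigman
  have hd : (0 : ℝ) < S.d := by exact_mod_cast S.hd
  have : 0 < Real.sqrt S.d := Real.sqrt_pos.2 hd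
  unfold omega
  positivity

lemma A0_eq (S : Setting) : S.A0 = 2 * S.omega * Real.sqrt S.L := by
  rw [A0, Real.sqrt_mul (by positivity), omega]
  ring

lemma timeScale_mul (S : Setting) : S.timeScale * (S.eta * S.omega * S.D) = S.N := by
  have := S.heta
  have := S.hsigma0
  have := S.hsigman
  have hd : (0 : ℝ) < S.d := by exact_mod_cast S.hd
  have : 0 < Real.sqrt S.d := Real.sqrt_pos.2 hd
  unfold timeScale omega D
  field_simp

/-- Noise patches of unlearnable samples. -/
def pairsSU (S : Setting) : Finset (Fin S.N × Fin S.P) :=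
  Finset.univ.filter fun a => a.1 ∈ S.SU ∧ a.2 ≠ S.sig a.1

lemma mem_pairsSU {a : Fin S.N × Fin S.P} :
    a ∈ S.pairsSU ↔ a.1 ∈ S.SU ∧ a.2 ≠ S.sig a.1 := by
  simp [pairsSU]

/-- Largest shifted coefficient of filter `r` over noise patches of unlearnable samples. -/
def maxHat (h : S.pairsSU.Nonempty) (r : Fin S.m) (t : ℕ) : ℝ :=
  S.pairsSU.sup' h fun a => S.rhoHat a.1 a.2 r t

lemma rhoHat_le_maxHat (h : S.pairsSU.Nonempty) (r : Fin S.m) (t : ℕ) {k : Fin S.N}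
    (hk : k ∈ S.SU) {q : Fin S.P} (hq : q ≠ S.sig k) :
    S.rhoHat k q r t ≤ S.maxHat h r t :=
  Finset.le_sup' (fun a : Fin S.N × Fin S.P => S.rhoHat a.1 a.2 r t)
    (mem_pairsSU.2 ⟨hk, hq⟩ : (k, q) ∈ S.pairsSU)

lemma exists_maxHat (h : S.pairsSU.Nonempty) (r : Fin S.m) (t : ℕ) :
    ∃ k ∈ S.SU, ∃ q, q ≠ S.sig k ∧ S.rhoHat k q r t = S.maxHat h r t := by
  obtain ⟨a, ha, hmax⟩ := Finset.exists_mem_eq_sup' h fun a => S.rhoHat a.1 a.2 r t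
  have := mem_pairsSU.1 ha
  exact ⟨a.1, this.1, a.2, this.2, hmax.symm⟩

lemma maxHat_mono (h : S.pairsSU.Nonempty) (r : Fin S.m) : Monotone (S.maxHat h r) :=
  fun _ _ hst => Finset.sup'_mono_fun fun a _ => rhoHat_mono a.1 a.2 r hst

/-- Cross terms are negligible against the leading coefficient `R` of a filter. -/
lemma resp_approx_of_leading (hdyn : S.ATDyn) (hE : S.EventE) (F : S.ParamFacts ζ C)
    (hc : SmallConst ζ C) {t : ℕ} {r : Fin S.m} {R : ℝ} (hR : S.omega / (6 * S.D) ≤ R)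
    (hSU : ∀ k ∈ S.SU, ∀ q, q ≠ S.sig k → S.rhoHat k q r t ≤ R)
    (hSL : ∀ k ∈ S.SL, ∀ q, q ≠ S.sig k → S.rho k q r t ≤ Real.sqrt S.L * R)
    {i : Fin S.N} {j : Fin S.P} (hj : j ≠ S.sig i) :
    |S.resp t i j r - S.rhoHat i j r t * sqnorm (S.x i j)| ≤ S.D * R / 100 := by
  have hD := S.D_pos
  have hω := S.omega_pos
  have hq := S.one_le_cbrtMP
  have hLT := F.two_le_LT
  have hL := F.one_le_L
  have hLL := F.L_le
  have hζ := hc.zeta_pos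
  have hζ' := hc.zeta_le
  have hs1 : 1 ≤ Real.sqrt S.L := Real.one_le_sqrt.2 hL
  have hs2 : Real.sqrt S.L ≤ S.LT := (Real.sqrt_le_left (by linarith)).2 (by nlinarith)
  have hRpos : 0 < R := lt_of_lt_of_le (by positivity) hR
  have hA : S.A0 / (S.D / 2) ≤ 24 * Real.sqrt S.L * R := by
    rw [A0_eq]
    calc 2 * S.omega * Real.sqrt S.L / (S.D / 2)
        = 24 * Real.sqrt S.L * (S.omega / (6 * S.D)) := by
          field_simp
          ring
      _ ≤ 24 * Real.sqrt S.L * R := by gcongr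
  have hrho : ∀ k q, q ≠ S.sig k → S.rho k q r t ≤ 25 * Real.sqrt S.L * R := by
    intro k q hkq
    rcases S.mem_SL_or_SU k with hk | hk
    · have h1 := hSL k hk q hkq
      have : 0 ≤ Real.sqrt S.L * R := by positivity
      linarith
    · have h1 := hSU k hk q hkq
      have hn := (sqnorm_bounds hE hkq).1
      have h2 := (abs_le.1 (abs_resp_zero_le hE hkq r)).1
      have h3 : -(S.A0 / (S.D / 2)) ≤ S.y k * dot (S.w 0 r) (S.x k q) / sqnorm (S.x k q) := by
        have hA0 := S.A0_nonneg
        have h4 : S.A0 / sqnorm (S.x k q) ≤ S.A0 / (S.D / 2) := by gcongr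
        have h5 : -S.A0 / sqnorm (S.x k q) ≤
            S.y k * dot (S.w 0 r) (S.x k q) / sqnorm (S.x k q) :=
          div_le_div_of_nonneg_right h2 (by linarith)
        rw [neg_div] at h5
        linarith
      rw [rhoHat] at h1
      nlinarith
  have h1 := resp_approx hdyn hE (by positivity) hrho hj
  have h2 := cross_le F (b := 25 * Real.sqrt S.L * R) (by positivity) le_rfl hζ.le
  refine h1.trans (h2.trans ?_)
  rw [div_le_div_iff₀ (by positivity) (by norm_num)]
  have h3 : ζ * 2500 * Real.sqrt S.L ≤ 1 * S.LT := by
    apply mul_le_mul _ hs2 (by positivity) (by norm_num)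
    linarith
  have h4 : 1 * S.LT ≤ S.cbrtMP * S.LT := by gcongr
  have h5 := mul_le_mul_of_nonneg_left (h3.trans h4) (by positivity : 0 ≤ S.D * R)
  linarith

lemma growth (hdyn : S.ATDyn) (hE : S.EventE) (F : S.ParamFacts ζ C)
    (hc : SmallConst ζ C) (hC1 : 0 < C1) (hζ : 125 * ζ ≤ C1)
    (hC : 300000 * (22 * (1700 * (1 + Real.exp (4 * C1 ^ 3))) ^ 2) ≤ C)
    (hne : S.pairsSU.Nonempty) {r : Fin S.m} (hR0 : S.omega / (6 * S.D) ≤ S.maxHat hne r 0)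
    {n : ℕ} (hnT : n ≤ S.T) (hnot : ∀ t < n, S.NotMemorized C1 t) :
    ∀ t < n, S.maxHat hne r t + (3 * S.eta / S.N * (1 / (1 + Real.exp (4 * C1 ^ 3))) *
      (6 / 25 * S.D ^ 2)) * S.maxHat hne r t ^ 2 ≤ S.maxHat hne r (t + 1) := by
  have hD := S.D_pos
  have hω := S.omega_pos
  have hL := F.one_le_L
  have hη := S.heta
  have hN := S.one_le_N
  have hs1 : 1 ≤ Real.sqrt S.L := Real.one_le_sqrt.2 hL
  have hexp := Real.exp_pos (4 * C1 ^ 3)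
  obtain ⟨ψ₁, hψ₁⟩ : ∃ z, z = 1 / (1 + Real.exp (4 * C1 ^ 3)) := ⟨_, rfl⟩
  have hψ₁pos : 0 < ψ₁ := by rw [hψ₁]; positivity
  have hR : ∀ t, S.omega / (6 * S.D) ≤ S.maxHat hne r t := fun t =>
    hR0.trans (maxHat_mono hne r (Nat.zero_le t))
  have hRpos : ∀ t, 0 < S.maxHat hne r t := fun t => lt_of_lt_of_le (by positivity) (hR t)
  rw [← hψ₁]
  have hstep : ∀ t < n, (∀ k ∈ S.SL, ∀ q, q ≠ S.sig k →
      S.rho k q r t ≤ Real.sqrt S.L * S.maxHat hne r t) →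
      S.maxHat hne r t + (3 * S.eta / S.N * ψ₁ * (6 / 25 * S.D ^ 2)) * S.maxHat hne r t ^ 2 ≤
        S.maxHat hne r (t + 1) := by
    intro t ht hSL
    obtain ⟨k, hk, q, hq, hkq⟩ := exists_maxHat hne r t
    have h1 := resp_approx_of_leading hdyn hE F hc (hR t)
      (fun k hk q hq => rhoHat_le_maxHat hne r t hk hq) hSL hq
    rw [hkq] at h1
    have hRt := hRpos t
    have hn := (sqnorm_bounds hE hq).1
    have h2 : 49 / 100 * (S.D * S.maxHat hne r t) ≤ S.resp t k q r := by
      have h3 := (abs_le.1 h1).1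
      have h4 := mul_le_mul_of_nonneg_left hn hRt.le
      linarith
    have h3 : 6 / 25 * S.D ^ 2 * S.maxHat hne r t ^ 2 ≤ S.resp t k q r ^ 2 := by
      have h4 : (49 / 100 * (S.D * S.maxHat hne r t)) ^ 2 ≤ S.resp t k q r ^ 2 := by gcongr
      have h5 : 0 < (S.D * S.maxHat hne r t) ^ 2 := by positivity
      nlinarith
    have h4 := psi_unlearnable_ge hdyn hE F hc hC1 hζ (ht.le.trans hnT) (hnot t ht) hk
    rw [← hψ₁] at h4
    have h5 := rhoHat_le_maxHat hne r (t + 1) hk hq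
    rw [rhoHat, rho_succ] at h5
    rw [rhoHat] at hkq
    have h6 : 3 * S.eta / S.N * ψ₁ * (6 / 25 * S.D ^ 2 * S.maxHat hne r t ^ 2) ≤
        3 * S.eta / S.N * psi (S.marg t k) * S.resp t k q r ^ 2 := by
      have := (psi_pos (S.marg t k)).le
      gcongr
    linarith
  have hSL : ∀ t ≤ n, ∀ k ∈ S.SL, ∀ q, q ≠ S.sig k →
      S.rho k q r t ≤ Real.sqrt S.L * S.maxHat hne r t := by
    intro t
    induction t with
    | zero =>
      intro _ k _ q _
      have := hRpos 0
      simp only [rho]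
      positivity
    | succ t ih =>
      intro ht k hk q hq
      have ih' := ih (by omega)
      rcases le_or_gt ⌈S.earlyTime⌉₊ t with hlate | hearly
      · have hinc := hstep t (by omega) ih'
        have happ := resp_approx_of_leading hdyn hE F hc (hR t)
          (fun k hk q hq => rhoHat_le_maxHat hne r t hk hq) ih' hq
        rw [rhoHat_mul_sqnorm hE hq] at happ
        have hRt := hRpos t
        have hn := sqnorm_bounds hE hq
        have h0 := abs_le.1 (abs_resp_zero_le hE hq r)
        have hA : S.A0 ≤ 12 * (Real.sqrt S.L * (S.D * S.maxHat hne r t)) := by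
          rw [A0_eq]
          have h1 := hR t
          rw [div_le_iff₀ (by positivity)] at h1
          have h2 := mul_le_mul_of_nonneg_left h1 (by positivity : 0 ≤ 2 * Real.sqrt S.L)
          linarith
        have hprod : S.rho k q r t * sqnorm (S.x k q) ≤
            3 / 2 * (Real.sqrt S.L * (S.D * S.maxHat hne r t)) := by
          calc S.rho k q r t * sqnorm (S.x k q)
              ≤ (Real.sqrt S.L * S.maxHat hne r t) * (3 * S.D / 2) :=
                mul_le_mul (ih' k hk q hq) hn.2 (by linarith [hn.1]) (by positivity)
            _ = _ := by ring
        have hprod0 : 0 ≤ S.rho k q r t * sqnorm (S.x k q) :=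
          mul_nonneg (rho_nonneg k q r t) (by linarith [hn.1])
        have hDR : S.D * S.maxHat hne r t ≤ Real.sqrt S.L * (S.D * S.maxHat hne r t) :=
          le_mul_of_one_le_left (by positivity) hs1
        have hDR0 : 0 < S.D * S.maxHat hne r t := by positivity
        have habs := abs_le.1 happ
        have hsq : S.resp t k q r ^ 2 ≤
            (14 * (Real.sqrt S.L * (S.D * S.maxHat hne r t))) ^ 2 := by
          apply sq_le_sq'
          · linarith [habs.1, h0.1]
          · linarith [habs.2, h0.2]
        have hψ := psi_learnable_le hdyn hE F hc (K := 1700 * (1 + Real.exp (4 * C1 ^ 3)))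
          (by linarith) hC hlate (by omega) hk
        have hψ' : psi (S.marg t k) * (196 * S.L) ≤ Real.sqrt S.L * (ψ₁ * (6 / 25)) := by
          have hsL : Real.sqrt S.L * Real.sqrt S.L = S.L := Real.mul_self_sqrt (by linarith)
          calc psi (S.marg t k) * (196 * S.L)
              ≤ 1 / (1700 * (1 + Real.exp (4 * C1 ^ 3)) * Real.sqrt S.L) * (196 * S.L) := by
                gcongr
            _ = 196 / 1700 * (Real.sqrt S.L * ψ₁) := by
                rw [hψ₁]
                nth_rewrite 2 [← hsL]
                field_simp
            _ ≤ Real.sqrt S.L * (ψ₁ * (6 / 25)) := by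
                have : 0 < Real.sqrt S.L * ψ₁ := by positivity
                linarith
        have hrho : 3 * S.eta / S.N * psi (S.marg t k) * S.resp t k q r ^ 2 ≤
            Real.sqrt S.L * (3 * S.eta / S.N * ψ₁ * (6 / 25 * S.D ^ 2) *
              S.maxHat hne r t ^ 2) := by
          have hψ0 := (psi_pos (S.marg t k)).le
          calc 3 * S.eta / S.N * psi (S.marg t k) * S.resp t k q r ^ 2
              ≤ 3 * S.eta / S.N * psi (S.marg t k) *
                  (14 * (Real.sqrt S.L * (S.D * S.maxHat hne r t))) ^ 2 := by gcongr
            _ = 3 * S.eta / S.N * (S.D ^ 2 * S.maxHat hne r t ^ 2) *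
                  (psi (S.marg t k) * (196 * Real.sqrt S.L ^ 2)) := by ring
            _ = 3 * S.eta / S.N * (S.D ^ 2 * S.maxHat hne r t ^ 2) *
                  (psi (S.marg t k) * (196 * S.L)) := by rw [Real.sq_sqrt (by linarith)]
            _ ≤ 3 * S.eta / S.N * (S.D ^ 2 * S.maxHat hne r t ^ 2) *
                  (Real.sqrt S.L * (ψ₁ * (6 / 25))) := by gcongr
            _ = _ := by ring
        have h7 := mul_le_mul_of_nonneg_left hinc (by positivity : 0 ≤ Real.sqrt S.L)
        have h8 := ih' k hk q hq
        rw [rho_succ]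
        linarith
      · have ht2 : ((t + 1 : ℕ) : ℝ) ≤ 2 * S.earlyTime := by
          have h1 : ((t + 1 : ℕ) : ℝ) ≤ (⌈S.earlyTime⌉₊ : ℕ) := by exact_mod_cast hearly
          exact h1.trans (ceil_earlyTime_le F)
        have h1 := rho_early hdyn hE F hc (t + 1) ht2 r k q hq
        refine h1.trans ?_
        rw [A0_eq]
        calc 2 * S.omega * Real.sqrt S.L / (1600 * S.D)
            = 3 / 400 * (Real.sqrt S.L * (S.omega / (6 * S.D))) := by
              field_simp
              ring
          _ ≤ 1 * (Real.sqrt S.L * S.maxHat hne r (t + 1)) := by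
              have := hR (t + 1)
              gcongr
              norm_num
          _ = _ := one_mul _
  exact fun t ht => hstep t ht (hSL t ht.le)

/-- The noise-memorization threshold is crossed within the stated time. -/
lemma exists_memorized (hdyn : S.ATDyn) (hE : S.EventE) (F : S.ParamFacts ζ C)
    (hc : SmallConst ζ C) (hC1 : 0 < C1) (hζ : 125 * ζ ≤ C1) (hC1C : C1 ≤ C)
    (hC : 300000 * (22 * (1700 * (1 + Real.exp (4 * C1 ^ 3))) ^ 2) ≤ C) :
    ∃ t : ℕ, (t : ℝ) ≤ 60 * (1 + Real.exp (4 * C1 ^ 3)) * S.timeScale ∧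
      ¬ S.NotMemorized C1 t := by
  by_contra! hcon
  have hD := S.D_pos
  have hω := S.omega_pos
  have hη := S.heta
  have hN := S.one_le_N
  have hX := S.timeScale_pos
  have hL := F.one_le_L
  have hs1 : 1 ≤ Real.sqrt S.L := Real.one_le_sqrt.2 hL
  obtain ⟨E, hEdef⟩ : ∃ E, E = 1 + Real.exp (4 * C1 ^ 3) := ⟨_, rfl⟩
  have hE1 : 1 ≤ E := by rw [hEdef]; linarith [Real.exp_pos (4 * C1 ^ 3)]
  obtain ⟨n, hn⟩ : ∃ n : ℕ, n = ⌊60 * E * S.timeScale⌋₊ := ⟨_, rfl⟩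
  have hnle : (n : ℝ) ≤ 60 * E * S.timeScale := by
    rw [hn]; exact Nat.floor_le (by positivity)
  have hX1 : 1 ≤ S.timeScale := by
    have := F.scale_large
    nlinarith
  have hEX : 1 ≤ E * S.timeScale := by nlinarith
  have hnge : 20 * E * S.timeScale ≤ n := by
    have : 60 * E * S.timeScale < n + 1 := by
      rw [hn]; exact Nat.lt_floor_add_one _
    linarith
  have hCE : 60 * E ≤ C := by
    rw [← hEdef] at hC
    nlinarith
  have hnT : n ≤ S.T := by
    have h1 : 60 * E * S.timeScale ≤ C * S.timeScale := by gcongr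
    have h2 : (n : ℝ) ≤ S.T := by linarith [F.scale_le_T]
    exact_mod_cast h2
  have hnot : ∀ t < n, S.NotMemorized C1 t := fun t ht => by
    apply hcon
    have : (t : ℝ) ≤ n := by exact_mod_cast ht.le
    rw [← hEdef]
    linarith
  obtain ⟨i, hi⟩ := F.SU_nonempty
  obtain ⟨j, hj⟩ := exists_noise_patch F i
  obtain ⟨r, hr⟩ := hE.2.2.2.2.2.2.2 i j hj
  have hne : S.pairsSU.Nonempty := ⟨(i, j), mem_pairsSU.2 ⟨hi, hj⟩⟩
  have hR0 : S.omega / (6 * S.D) ≤ S.maxHat hne r 0 := by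
    refine le_trans ?_ (rhoHat_le_maxHat hne r 0 hi hj)
    have hn := sqnorm_bounds hE hj
    have hsq : 0 < sqnorm (S.x i j) := by linarith [hn.1]
    rw [rhoHat, rho, zero_add]
    calc S.omega / (6 * S.D) = S.omega / 4 / (3 * S.D / 2) := by
          field_simp
          norm_num
      _ ≤ S.omega / 4 / sqnorm (S.x i j) := by
          gcongr
          exact hn.2
      _ ≤ _ := by
          gcongr
          exact hr
  have hgrow := growth hdyn hE F hc hC1 hζ hC hne hR0 hnT hnot
  rw [← hEdef] at hgrow
  have hRpos : ∀ t, 0 < S.maxHat hne r t := fun t =>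
    lt_of_lt_of_le (by positivity) (hR0.trans (maxHat_mono hne r (Nat.zero_le t)))
  have hle : ∀ t < n, (3 * S.eta / S.N * (1 / E) * (6 / 25 * S.D ^ 2)) * S.maxHat hne r t ≤ 1 := by
    intro t ht
    obtain ⟨k, hk, q, hq, hkq⟩ := exists_maxHat hne r t
    have h1 := hnot t ht r k hk q hq
    rw [hkq] at h1
    have hcb := S.one_le_cbrtMP
    have h2 : S.memThreshold C1 ≤ C / S.D := by
      have : 0 ≤ C := by linarith [hc.C_large]
      unfold memThreshold
      gcongr
      exact le_mul_of_one_le_left hD.le hcb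
    have h3 : 3 * S.eta / S.N * (1 / E) * (6 / 25 * S.D ^ 2) ≤ S.eta * 1 * S.D ^ 2 := by
      have h4 : 3 * S.eta / S.N ≤ 3 * S.eta := div_le_self (by positivity) hN
      have h5 : 1 / E ≤ 1 := by rw [div_le_one (by linarith)]; exact hE1
      calc 3 * S.eta / S.N * (1 / E) * (6 / 25 * S.D ^ 2)
          ≤ 3 * S.eta * 1 * (6 / 25 * S.D ^ 2) := by gcongr
        _ ≤ S.eta * 1 * S.D ^ 2 := by
            have : 0 < S.eta * S.D ^ 2 := by positivity
            linarith
    calc 3 * S.eta / S.N * (1 / E) * (6 / 25 * S.D ^ 2) * S.maxHat hne r t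
        ≤ S.eta * 1 * S.D ^ 2 * (C / S.D) := by
          have := (hRpos t).le
          have := h1.trans h2
          gcongr
      _ = C * (S.eta * S.D * 1) := by field_simp
      _ ≤ C * (S.eta * S.D * S.LT) := by
          have := F.two_le_LT
          have : 0 < C := by linarith [hc.C_large]
          gcongr
          linarith
      _ ≤ 1 := F.eta_D
  have hfin := quadratic_growth_time (a := S.maxHat hne r) (by positivity) (hRpos 0) hgrow hle
  have hcontra : 2 ≤ (n : ℝ) * (3 * S.eta / S.N * (1 / E) * (6 / 25 * S.D ^ 2)) *
      S.maxHat hne r 0 := by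
    have hts := S.timeScale_mul
    calc (2 : ℝ) ≤ 12 / 5 := by norm_num
      _ = 12 / 5 * (S.timeScale * (S.eta * S.omega * S.D)) / S.N := by
          rw [hts]; field_simp
      _ = (20 * E * S.timeScale) * (3 * S.eta / S.N * (1 / E) * (6 / 25 * S.D ^ 2)) *
          (S.omega / (6 * S.D)) := by
          field_simp
          ring
      _ ≤ _ := by gcongr
  linarith

/-- The conclusions on `T₀` and `T₁`, given the parameter inequalities. -/
lemma main_of_paramFacts (hdyn : S.ATDyn) (hE : S.EventE) (F : S.ParamFacts ζ C)
    (hc : SmallConst ζ C) (hC0 : 0 < C0) (hC1 : 0 < C1) (hζ : 125 * ζ ≤ C1) (hC1C : C1 ≤ C)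
    (hCC0 : 300000 * (1 + Real.exp (C0 ^ 3 + 1)) ≤ C)
    (hC : 300000 * (22 * (1700 * (1 + Real.exp (4 * C1 ^ 3))) ^ 2) ≤ C) :
    (S.earlyTime ≤ (S.T1 C1 : ℝ) ∧
      (S.T1 C1 : ℝ) ≤ 60 * (1 + Real.exp (4 * C1 ^ 3)) * S.timeScale) ∧
    S.T0 C0 < S.T1 C1 ∧
    (∃ i ∈ S.SU, ∃ j, j ≠ S.sig i ∧ ∃ r : Fin S.m,
      ∀ t, S.T1 C1 ≤ t → t ≤ S.T → C1 / (3 * S.cbrtMP) ≤ S.resp t i j r) := by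
  obtain ⟨t, ht, hmem⟩ := exists_memorized hdyn hE F hc hC1 hζ hC1C hC
  have hset : t ∈ {t : ℕ | S.memThreshold C1 < S.rhoHatMax t} := by
    rw [notMemorized_iff F, not_le] at hmem
    exact hmem
  have hT1t : S.T1 C1 ≤ t := by rw [T1_eq]; exact Nat.sInf_le hset
  have hT1mem : ¬ S.NotMemorized C1 (S.T1 C1) := by
    rw [notMemorized_iff F, not_le, T1_eq]
    exact Nat.sInf_mem (s := {t : ℕ | S.memThreshold C1 < S.rhoHatMax t}) ⟨t, hset⟩
  have hlow : S.earlyTime ≤ (S.T1 C1 : ℝ) := by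
    by_contra! hlt
    exact hT1mem (notMemorized_early hdyn hE F hc hζ (by linarith [earlyTime_pos F]))
  refine ⟨⟨hlow, le_trans (by exact_mod_cast hT1t) ht⟩,
    lt_of_lt_of_le (T0_lt_ceil hdyn hE F hc hC0 hCC0) (Nat.ceil_le.2 hlow), ?_⟩
  unfold NotMemorized at hT1mem
  push Not at hT1mem
  obtain ⟨r, k, hk, q, hq, hlt⟩ := hT1mem
  refine ⟨k, hk, q, hq, r, fun t ht htT => ?_⟩
  have hD := S.D_pos
  have hcb := S.one_le_cbrtMP
  have h1 : S.memThreshold C1 ≤ S.rhoHat k q r t := hlt.le.trans (rhoHat_mono k q r ht)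
  have h2 := (abs_le.1 (resp_approx_horizon hdyn hE F hc htT r hq)).1
  have hn := (sqnorm_bounds hE hq).1
  have h3 : S.memThreshold C1 * (S.D / 2) ≤ S.rhoHat k q r t * sqnorm (S.x k q) :=
    mul_le_mul h1 hn (by positivity) ((memThreshold_pos hC1).le.trans h1)
  have h4 : S.memThreshold C1 * (S.D / 2) = C1 / 2 / S.cbrtMP := by
    unfold memThreshold
    field_simp
  have h5 : 10 * ζ / S.cbrtMP ≤ C1 / 6 / S.cbrtMP := by
    gcongr
    linarith
  have h6 : C1 / (3 * S.cbrtMP) = C1 / 2 / S.cbrtMP - C1 / 6 / S.cbrtMP := by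
    field_simp
    norm_num
  rw [h6]
  linarith

/-! ### Verification of the parameter inequalities -/

lemma pos_of_pos_of_le_div {x a b : ℝ} (hx : 0 < x) (ha : 0 < a) (h : x ≤ a / b) : 0 < b := by
  by_contra hb
  linarith [div_nonpos_of_nonneg_of_nonpos ha.le (not_lt.1 hb)]

/-- The logarithm `log(TdNmP/δ)`. -/
def Ld (S : Setting) : ℝ := Real.log ((S.T : ℝ) * S.d * S.N * S.m * S.P / S.delta)

lemma eta_bounds (hC : 0 < C) (H : S.CondH C) :
    0 < S.LT ∧ C * (S.eta * S.D * S.LT) ≤ 1 ∧ C * (S.eta * S.alpha ^ 2 * S.LT) ≤ 1 := by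
  obtain ⟨-, -, -, -, -, h, -⟩ := H
  change S.eta ≤ _ / S.LT at h
  have hα := S.halpha
  have hσ := S.hsigman
  have hσ0 := S.hsigma0
  have hd : (0 : ℝ) < S.d := Nat.cast_pos.2 S.hd
  have hLT : 0 < S.LT := pos_of_pos_of_le_div S.heta (by positivity) h
  rw [le_div_iff₀ hLT] at h
  refine ⟨hLT, ?_, ?_⟩
  · have h1 : S.eta * S.LT ≤ C⁻¹ * (1 / (S.sigman ^ 2 * S.d)) :=
      h.trans (mul_le_mul_of_nonneg_left ((min_le_left _ _).trans (min_le_right _ _))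
        (by positivity))
    calc C * (S.eta * S.D * S.LT) = C * (S.sigman ^ 2 * S.d) * (S.eta * S.LT) := by
          unfold D; ring
      _ ≤ C * (S.sigman ^ 2 * S.d) * (C⁻¹ * (1 / (S.sigman ^ 2 * S.d))) := by gcongr
      _ = 1 := by field_simp
  · have h1 : S.eta * S.LT ≤ C⁻¹ * (1 / S.alpha ^ 2) :=
      h.trans (mul_le_mul_of_nonneg_left (min_le_right _ _) (by positivity))
    calc C * (S.eta * S.alpha ^ 2 * S.LT) = C * S.alpha ^ 2 * (S.eta * S.LT) := by ring
      _ ≤ C * S.alpha ^ 2 * (C⁻¹ * (1 / S.alpha ^ 2)) := by gcongr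
      _ = 1 := by field_simp

lemma rpow_two_thirds {z : ℝ} (hz : 0 ≤ z) : z ^ ((2 : ℝ) / 3) = (z ^ ((1 : ℝ) / 3)) ^ 2 := by
  rw [← Real.rpow_natCast, ← Real.rpow_mul hz]
  norm_num

lemma sigma0_bounds (hC : 0 < C) (H : S.CondH C) :
    0 < S.Ld ∧ C * (S.sigma0 * S.sigman * Real.sqrt S.d * S.Ld) * S.cbrtMP ≤ 1 ∧
      C * (S.alpha * S.sigma0 * S.Ld) * S.cbrtM ≤ 1 ∧
      C * (S.sigma0 * S.sigman * S.d * S.Ld) ≤ 1 := by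
  obtain ⟨-, -, -, -, h, -⟩ := H
  change S.sigma0 ≤ _ / S.Ld at h
  have hα := S.halpha
  have hσ := S.hsigman
  have hσ0 := S.hsigma0
  have hd : (0 : ℝ) < S.d := Nat.cast_pos.2 S.hd
  have hm := S.one_le_m
  have hP := S.one_le_P
  have hm0 : (0 : ℝ) < S.m := by linarith
  have hP0 : (0 : ℝ) < S.P := by linarith
  have hq := S.one_le_cbrtMP
  have hqm := S.one_le_cbrtM
  have hsd : 0 < Real.sqrt S.d := Real.sqrt_pos.2 hd
  have hL : 0 < S.Ld := pos_of_pos_of_le_div S.hsigma0 (by positivity) h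
  rw [le_div_iff₀ hL] at h
  refine ⟨hL, ?_, ?_, ?_⟩
  · have h1 : S.sigma0 * S.Ld ≤ C⁻¹ * (1 / (S.cbrtMP ^ 2 * S.sigman * Real.sqrt S.d)) := by
      have e : S.cbrtMP ^ 2 = (S.m : ℝ) ^ ((2 : ℝ) / 3) * (S.P : ℝ) ^ ((2 : ℝ) / 3) := by
        rw [← Real.mul_rpow hm0.le hP0.le, rpow_two_thirds (by positivity), cbrtMP]
      rw [e]
      exact h.trans (mul_le_mul_of_nonneg_left ((min_le_left _ _).trans (min_le_left _ _))
        (by positivity))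
    calc C * (S.sigma0 * S.sigman * Real.sqrt S.d * S.Ld) * S.cbrtMP
        = C * (S.sigman * Real.sqrt S.d * S.cbrtMP) * (S.sigma0 * S.Ld) := by ring
      _ ≤ C * (S.sigman * Real.sqrt S.d * S.cbrtMP) *
          (C⁻¹ * (1 / (S.cbrtMP ^ 2 * S.sigman * Real.sqrt S.d))) := by gcongr
      _ = 1 / S.cbrtMP := by field_simp
      _ ≤ 1 := (div_le_one (by linarith)).2 hq
  · have h1 : S.sigma0 * S.Ld ≤ C⁻¹ * (1 / (S.alpha * S.cbrtM ^ 2)) := by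
      rw [cbrtM, ← rpow_two_thirds hm0.le]
      exact h.trans (mul_le_mul_of_nonneg_left ((min_le_left _ _).trans (min_le_right _ _))
        (by positivity))
    calc C * (S.alpha * S.sigma0 * S.Ld) * S.cbrtM
        = C * (S.alpha * S.cbrtM) * (S.sigma0 * S.Ld) := by ring
      _ ≤ C * (S.alpha * S.cbrtM) * (C⁻¹ * (1 / (S.alpha * S.cbrtM ^ 2))) := by gcongr
      _ = 1 / S.cbrtM := by field_simp
      _ ≤ 1 := (div_le_one (by linarith)).2 hqm
  · have h1 : S.sigma0 * S.Ld ≤ C⁻¹ * (1 / (S.sigman * S.m ^ 2 * Real.sqrt S.P * S.d)) :=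
      h.trans (mul_le_mul_of_nonneg_left (min_le_right _ _) (by positivity))
    have h2 : 1 ≤ (S.m : ℝ) ^ 2 * Real.sqrt S.P :=
      one_le_mul_of_one_le_of_one_le (one_le_pow₀ hm) (Real.one_le_sqrt.2 hP)
    calc C * (S.sigma0 * S.sigman * S.d * S.Ld) = C * (S.sigman * S.d) * (S.sigma0 * S.Ld) := by
          ring
      _ ≤ C * (S.sigman * S.d) *
          (C⁻¹ * (1 / (S.sigman * S.m ^ 2 * Real.sqrt S.P * S.d))) := by gcongr
      _ = 1 / ((S.m : ℝ) ^ 2 * Real.sqrt S.P) := by field_simp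
      _ ≤ 1 := (div_le_one (by linarith)).2 h2

/-- The horizon condition and the logarithmic factors force `T` to be large. -/
lemma time_bounds (hC : 2000 ≤ C) (H : S.CondH C) :
    16 ≤ (S.T : ℝ) ∧ S.LT ≤ S.Ld ∧ C ^ 2 * (S.LT * S.Ld) ≤ S.timeScale := by
  have hC0 : 0 < C := by linarith
  obtain ⟨hLT, h1, -⟩ := eta_bounds hC0 H
  obtain ⟨hLd, -, -, h2⟩ := sigma0_bounds hC0 H
  obtain ⟨-, hT, -, -, -, -, -, -, -, -, hP2, -⟩ := H
  have hη := S.heta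
  have hσ := S.hsigman
  have hσ0 := S.hsigma0
  have hδ0 := S.hdelta0
  have hδ1 := S.hdelta1
  have hd1 := S.one_le_d
  have hm := S.one_le_m
  have hN := S.one_le_N
  have hP : (2 : ℝ) ≤ S.P := by exact_mod_cast hP2
  have hd0 : (0 : ℝ) < S.d := by linarith
  have hT1 : (1 : ℝ) ≤ S.T := by
    rcases Nat.eq_zero_or_pos S.T with h | h
    · simp [LT, h] at hLT
    · exact_mod_cast h
  have hsd : Real.sqrt S.d ≤ S.d := by
    rw [Real.sqrt_le_left hd0.le]
    nlinarith
  have hsd0 : 0 < Real.sqrt S.d := Real.sqrt_pos.2 hd0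
  have hscale : C ^ 2 * (S.LT * S.Ld) ≤ S.timeScale := by
    unfold timeScale
    rw [le_div_iff₀ (by positivity)]
    have h3 : C * (S.eta * S.D * S.LT) * (C * (S.sigma0 * S.sigman * S.d * S.Ld)) ≤ 1 * 1 := by
      have : 0 ≤ S.D := by unfold D; positivity
      gcongr
    calc C ^ 2 * (S.LT * S.Ld) * (S.eta * S.sigma0 * S.sigman ^ 3 * (S.d * Real.sqrt S.d))
        ≤ C ^ 2 * (S.LT * S.Ld) * (S.eta * S.sigma0 * S.sigman ^ 3 * (S.d * S.d)) := by gcongr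
      _ = C * (S.eta * S.D * S.LT) * (C * (S.sigma0 * S.sigman * S.d * S.Ld)) := by
          unfold D; ring
      _ ≤ S.N := by linarith
  have hLL : S.LT ≤ S.Ld := by
    unfold LT Ld
    have : (S.T : ℝ) * S.N * S.m * S.P ≤ S.T * S.d * S.N * S.m * S.P := by
      have h4 : (S.T : ℝ) ≤ S.T * S.d := le_mul_of_one_le_right (by linarith) hd1
      gcongr
    apply Real.log_le_log (by positivity)
    gcongr
  have hLT2 : 1 / 2 ≤ S.LT := by
    have h5 : (2 : ℝ) ≤ S.T * S.N * S.m * S.P / S.delta := by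
      rw [le_div_iff₀ hδ0]
      have : (1 : ℝ) * 1 * 1 * 2 ≤ S.T * S.N * S.m * S.P := by gcongr
      linarith
    have h6 := Real.log_le_log (by norm_num) h5
    have := Real.log_two_gt_d9
    unfold LT
    linarith
  have hTs : C * S.timeScale ≤ S.T := by
    refine le_trans (le_of_eq ?_) hT
    unfold timeScale
    ring
  refine ⟨?_, hLL, hscale⟩
  have h7 : 1 / 2 * (1 / 2) ≤ S.LT * S.Ld :=
    mul_le_mul hLT2 (hLT2.trans hLL) (by norm_num) hLT.le
  have h8 : (2000 : ℝ) ^ 2 * (1 / 2 * (1 / 2)) ≤ C ^ 2 * (S.LT * S.Ld) := by gcongr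
  have h9 : 2000 * (2000 ^ 2 * (1 / 2 * (1 / 2))) ≤ C * S.timeScale :=
    mul_le_mul hC (h8.trans hscale) (by norm_num) hC0.le
  linarith

lemma card_SL_add_card_SU (S : Setting) : (S.SL.card : ℝ) + S.SU.card = S.N := by
  have h := Finset.card_union_of_disjoint S.hdisj
  rw [S.hunion, Finset.card_univ, Fintype.card_fin] at h
  exact_mod_cast h.symm

lemma card_SL_eq (S : Setting) : (S.N : ℝ) * (1 - S.pun) = S.SL.card := by
  have hN : (S.N : ℝ) ≠ 0 := by linarith [S.one_le_N]
  have h := S.card_SL_add_card_SU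
  unfold pun
  rw [mul_sub, mul_one, mul_div_cancel₀ _ hN]
  linarith

lemma nonempty_of_sparse (hC : 2000 ≤ C) (H : S.CondH C) (hS : S.SparseRegime C) :
    S.SU.Nonempty ∧ S.SL.Nonempty := by
  obtain ⟨h1, h2, h3⟩ := hS
  obtain ⟨hT, -⟩ := time_bounds hC H
  have hN := S.one_le_N
  have hN0 : (0 : ℝ) < S.N := by linarith
  have hm := S.one_le_m
  have hP := S.one_le_P
  have hd := S.one_le_d
  have hδ0 := S.hdelta0
  have hC0 : 0 < C := by linarith
  refine ⟨?_, ?_⟩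
  · rw [← Finset.card_pos]
    have : 0 < S.pun := lt_of_lt_of_le (by positivity) h1
    unfold pun at this
    rw [div_pos_iff_of_pos_right hN0] at this
    exact_mod_cast this
  · rw [← Finset.card_pos]
    have hlog0 : 0 ≤ Real.log S.d := Real.log_nonneg hd
    have hlog : Real.log S.d ≤ Real.log (S.T * S.d * S.N * S.m * S.P / S.delta) := by
      apply Real.log_le_log (by linarith)
      rw [le_div_iff₀ hδ0]
      have h4 : (1 : ℝ) * S.d * 1 * 1 * 1 ≤ S.T * S.d * S.N * S.m * S.P := by
        gcongr
        linarith
      have h5 : (S.d : ℝ) * S.delta ≤ S.d * 1 := by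
        gcongr
        exact S.hdelta1.le
      linarith
    have h6 : 1 * 1 * 1 * Real.log S.d ≤ S.N := by
      refine le_trans ?_ h3
      gcongr
      linarith
    have h7 : S.pun ≤ C⁻¹ := by
      refine h2.trans ?_
      rw [div_le_iff₀ hN0]
      gcongr
      linarith
    have h8 : C⁻¹ ≤ 2000⁻¹ := by gcongr
    have h9 : 0 < (S.N : ℝ) * (1 - S.pun) := by
      apply mul_pos hN0
      have : (2000 : ℝ)⁻¹ < 1 := by norm_num
      linarith
    rw [card_SL_eq] at h9
    exact_mod_cast h9

lemma signal_of_cond (hC : 2000 ≤ C) (H : S.CondH C) (hS : S.SparseRegime C) :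
    C ^ 3 * S.sigman ^ 3 * (S.d * Real.sqrt S.d) * S.LT ^ 3 ≤ S.alpha ^ 3 * S.SL.card := by
  have hne := (nonempty_of_sparse hC H hS).2
  have hLT := (eta_bounds (by linarith) H).1
  obtain ⟨-, -, -, h, -⟩ := H
  have hσ := S.hsigman
  change C * S.sigman * Real.sqrt S.d * S.LT / _ ≤ _ at h
  rw [card_SL_eq] at h
  have hc : (0 : ℝ) < S.SL.card := by exact_mod_cast hne.card_pos
  rw [div_le_iff₀ (by positivity)] at h
  have h1 := cube_le_cube h
  rw [mul_pow S.alpha, rpow_third_cube hc.le] at h1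
  refine le_trans (le_of_eq ?_) h1
  have h2 : Real.sqrt S.d ^ 2 = S.d := Real.sq_sqrt (Nat.cast_nonneg _)
  linear_combination (-(C ^ 3 * S.sigman ^ 3 * Real.sqrt S.d * S.LT ^ 3)) * h2

lemma L_bounds (hT : 16 ≤ (S.T : ℝ)) : 2 ≤ S.L ∧ S.L ≤ S.LT := by
  have hδ0 := S.hdelta0
  have hδ1 := S.hdelta1
  have hN := S.one_le_N
  have hm := S.one_le_m
  have hP := S.one_le_P
  refine ⟨?_, ?_⟩
  · have h1 : (16 : ℝ) ≤ 16 * S.N * S.m * S.P / S.delta := by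
      rw [le_div_iff₀ hδ0]
      have : (16 : ℝ) * 1 * 1 * 1 ≤ 16 * S.N * S.m * S.P := by gcongr
      linarith
    have h2 := Real.log_le_log (by norm_num) h1
    have h3 : Real.log 16 = 4 * Real.log 2 := by
      rw [show (16 : ℝ) = 2 ^ 4 by norm_num, Real.log_pow]
      norm_num
    have := Real.log_two_gt_d9
    unfold L
    linarith
  · unfold L LT
    apply Real.log_le_log (by positivity)
    gcongr

lemma exp_neg_LT_le (hT : 16 ≤ (S.T : ℝ)) : Real.exp (-S.LT) ≤ 1 / S.T := by
  have hδ0 := S.hdelta0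
  have hδ1 := S.hdelta1
  have hN := S.one_le_N
  have hm := S.one_le_m
  have hP := S.one_le_P
  have hT0 : (0 : ℝ) < S.T := by linarith
  unfold LT
  rw [Real.exp_neg, Real.exp_log (by positivity), ← one_div]
  apply one_div_le_one_div_of_le hT0
  rw [le_div_iff₀ hδ0]
  calc (S.T : ℝ) * S.delta ≤ S.T * 1 := by gcongr
    _ = S.T * 1 * 1 * 1 := by ring
    _ ≤ S.T * S.N * S.m * S.P := by gcongr

lemma cross_of_cond (hζ : 0 < ζ) (hC : 2000 ≤ C) (hCζ : (3 / ζ) ^ 6 ≤ C) (H : S.CondH C) :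
    S.N * S.P * S.chi * S.cbrtMP * S.LT ≤ ζ * S.D := by
  obtain ⟨hT, -⟩ := time_bounds hC H
  obtain ⟨hL2, hLLT⟩ := L_bounds hT
  obtain ⟨-, -, hdim, -, -, -, -, -, -, -, -, hPC⟩ := H
  change C * S.m ^ 2 * S.P ^ 2 * S.N ^ 2 * S.LT ^ 4 ≤ S.d at hdim
  have hδ0 := S.hdelta0
  have hδ1 := S.hdelta1
  have hσ := S.hsigman
  have hN := S.one_le_N
  have hm := S.one_le_m
  have hP := S.one_le_P
  have hC0 : 0 < C := by linarith
  have hLT1 : 1 ≤ S.LT := by linarith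
  obtain ⟨c, hc0, hcC⟩ : ∃ c : ℝ, 0 < c ∧ c ^ 6 = C := by
    refine ⟨C ^ ((1 : ℝ) / 6), by positivity, ?_⟩
    rw [← Real.rpow_natCast, ← Real.rpow_mul hC0.le]
    norm_num
  have hcζ : 3 ≤ ζ * c := by
    have h1 : 3 / ζ ≤ c := by
      rw [← hcC] at hCζ
      exact le_of_pow_le_pow_left₀ (by norm_num) hc0.le hCζ
    rwa [div_le_iff₀ hζ, mul_comm] at h1
  have hlog : Real.log (16 * S.N ^ 2 * S.P ^ 2 / S.delta) ≤ 2 * S.LT := by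
    unfold LT
    rw [← Real.log_rpow (by positivity), Real.rpow_two]
    apply Real.log_le_log (by positivity)
    rw [div_pow, div_le_div_iff₀ hδ0 (by positivity)]
    have h1 : S.delta ^ 2 ≤ S.delta := by nlinarith
    have h2 : 16 * (S.N : ℝ) ^ 2 * S.P ^ 2 ≤ (S.T * S.N * S.m * S.P) ^ 2 := by
      have h3 : (16 : ℝ) ≤ (S.T : ℝ) ^ 2 := by nlinarith
      calc 16 * (S.N : ℝ) ^ 2 * S.P ^ 2 = 16 * (S.N : ℝ) ^ 2 * 1 ^ 2 * S.P ^ 2 := by ring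
        _ ≤ (S.T : ℝ) ^ 2 * S.N ^ 2 * S.m ^ 2 * S.P ^ 2 := by gcongr
        _ = (S.T * S.N * S.m * S.P) ^ 2 := by ring
    gcongr
  have hroot : c ^ 3 * (S.m * S.P * S.N * S.LT ^ 2) ≤ Real.sqrt S.d := by
    apply Real.le_sqrt_of_sq_le
    refine le_trans (le_of_eq ?_) hdim
    rw [← hcC]
    ring
  have hq : S.cbrtMP ≤ S.m * c ^ 2 := by
    have h1 : S.cbrtMP ^ 3 ≤ (S.m * c ^ 2) ^ 3 := by
      rw [cbrtMP_cube]
      calc (S.m : ℝ) * S.P ≤ S.m ^ 3 * C := by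
            gcongr
            exact le_self_pow₀ hm (by norm_num)
        _ = (S.m * c ^ 2) ^ 3 := by rw [← hcC]; ring
    exact le_of_pow_le_pow_left₀ (by norm_num) (by positivity) h1
  have hchi : S.chi ≤ 2 * S.sigman ^ 2 * (Real.sqrt S.d * (3 / 2 * S.LT)) := by
    unfold chi
    rw [Real.sqrt_mul (Nat.cast_nonneg _)]
    have : Real.sqrt (Real.log (16 * S.N ^ 2 * S.P ^ 2 / S.delta)) ≤ 3 / 2 * S.LT := by
      apply Real.sqrt_le_iff.2 ⟨by linarith, ?_⟩
      nlinarith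
    gcongr
  have hsd : Real.sqrt S.d * Real.sqrt S.d = S.d := Real.mul_self_sqrt (Nat.cast_nonneg _)
  have h1 : c * (S.N * S.P * S.chi * S.cbrtMP * S.LT) ≤ 3 * S.D := by
    have hq0 := S.one_le_cbrtMP
    calc c * (S.N * S.P * S.chi * S.cbrtMP * S.LT)
        ≤ c * (S.N * S.P * (2 * S.sigman ^ 2 * (Real.sqrt S.d * (3 / 2 * S.LT))) *
            (S.m * c ^ 2) * S.LT) := by gcongr
      _ = 3 * (S.sigman ^ 2 * (Real.sqrt S.d * (c ^ 3 * (S.m * S.P * S.N * S.LT ^ 2)))) := by ring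
      _ ≤ 3 * (S.sigman ^ 2 * (Real.sqrt S.d * Real.sqrt S.d)) := by gcongr
      _ = 3 * S.D := by rw [hsd, D]
  have hD : 0 ≤ S.D := by unfold D; positivity
  have h2 : c * (S.N * S.P * S.chi * S.cbrtMP * S.LT) ≤ c * (ζ * S.D) := by
    calc _ ≤ 3 * S.D := h1
      _ ≤ ζ * c * S.D := by gcongr
      _ = c * (ζ * S.D) := by ring
  exact le_of_mul_le_mul_left h2 hc0

/-- Condition (H) in the sparse-unlearnable regime supplies all parameter inequalities. -/
lemma paramFacts_of_cond (hζ : 0 < ζ) (hC : 2000 ≤ C) (hCζ : (3 / ζ) ^ 6 ≤ C) (H : S.CondH C)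
    (hS : S.SparseRegime C) : S.ParamFacts ζ C := by
  have hC0 : 0 < C := by linarith
  obtain ⟨hT, hLTd, hscale⟩ := time_bounds hC H
  obtain ⟨hL2, hLLT⟩ := L_bounds hT
  obtain ⟨-, hη1, hη2⟩ := eta_bounds hC0 H
  obtain ⟨-, h1, h2, -⟩ := sigma0_bounds hC0 H
  obtain ⟨hSU, hSL⟩ := nonempty_of_sparse hC H hS
  have hα := S.halpha
  have hσ := S.hsigman
  have hσ0 := S.hsigma0
  have hN := S.one_le_N
  have hm := S.one_le_m
  have hP := S.one_le_P
  have hδ0 := S.hdelta0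
  have hδ1 := S.hdelta1
  have hq := S.one_le_cbrtMP
  have hqm := S.one_le_cbrtM
  have hsL : Real.sqrt S.L ≤ S.L := Real.sqrt_le_iff.2 ⟨by linarith, by nlinarith⟩
  refine
    { one_le_L := by linarith
      L_le := hLLT
      two_le_LT := by linarith
      T_pos := Nat.cast_pos.1 (show (0 : ℝ) < S.T by linarith)
      exp_le := exp_neg_LT_le hT
      cross := cross_of_cond hζ hC hCζ H
      A0_le := ?_
      B0_le := ?_
      eta_D := hη1
      eta_alpha := hη2
      signal := signal_of_cond hC H hS
      eps_le := ?_
      SU_nonempty := hSU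
      SL_nonempty := hSL
      two_le_P := H.2.2.2.2.2.2.2.2.2.2.1
      scale_large := ?_
      scale_le_T := le_trans (le_of_eq (by unfold timeScale; ring)) H.2.1 }
  · unfold A0
    rw [Real.sqrt_mul (Nat.cast_nonneg _)]
    calc C * (2 * S.sigma0 * S.sigman * (Real.sqrt S.d * Real.sqrt S.L)) * S.cbrtMP
        ≤ C * (2 * S.sigma0 * S.sigman * (Real.sqrt S.d * S.Ld)) * S.cbrtMP := by
          gcongr
          linarith
      _ = 2 * (C * (S.sigma0 * S.sigman * Real.sqrt S.d * S.Ld) * S.cbrtMP) := by ring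
      _ ≤ 2 := by linarith
  · have hlog : Real.log (16 * S.m / S.delta) ≤ S.L := by
      unfold L
      apply Real.log_le_log (by positivity)
      have : 16 * (S.m : ℝ) ≤ 16 * S.N * S.m * S.P := by
        calc 16 * (S.m : ℝ) = 16 * 1 * S.m * 1 := by ring
          _ ≤ 16 * S.N * S.m * S.P := by gcongr
      gcongr
    have hs : Real.sqrt (2 * Real.log (16 * S.m / S.delta)) ≤ 2 * S.Ld :=
      Real.sqrt_le_iff.2 ⟨by linarith, by nlinarith⟩
    unfold B0
    calc C * (S.alpha * (S.sigma0 * Real.sqrt (2 * Real.log (16 * S.m / S.delta)))) * S.cbrtM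
        ≤ C * (S.alpha * (S.sigma0 * (2 * S.Ld))) * S.cbrtM := by gcongr
      _ = 2 * (C * (S.alpha * S.sigma0 * S.Ld) * S.cbrtM) := by ring
      _ ≤ 2 := by linarith
  · have h3 : S.eps ≤ C⁻¹ * S.alpha :=
      H.2.2.2.2.2.2.2.1.le.trans (mul_le_mul_of_nonneg_left (min_le_left _ _) (by positivity))
    calc C * S.eps ≤ C * (C⁻¹ * S.alpha) := by gcongr
      _ = S.alpha := by field_simp
  · refine le_trans ?_ hscale
    have h4 : S.L * Real.sqrt S.L ≤ S.LT * S.Ld := by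
      gcongr
      · linarith
      · linarith
    have h5 : (76800 : ℝ) ≤ C ^ 2 := by nlinarith
    gcongr

/-- Noise memorization for arbitrary threshold constants: the conclusions hold as soon as the
constant in the parameter conditions is large enough in terms of `C0` and `C1`. -/
theorem noise_memorization (hC0 : 0 < C0) (hC1 : 0 < C1) :
    ∃ Cbar : ℝ, 1 ≤ Cbar ∧ ∀ C, Cbar ≤ C →
      ∀ S : Setting, S.ATDyn → S.EventE → S.CondH C → S.SparseRegime C →
        (S.earlyTime ≤ S.T1 C1 ∧
          (S.T1 C1 : ℝ) ≤ 60 * (1 + Real.exp (4 * C1 ^ 3)) * S.timeScale) ∧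
        S.T0 C0 < S.T1 C1 ∧
        (∃ i ∈ S.SU, ∃ j, j ≠ S.sig i ∧ ∃ r : Fin S.m,
          ∀ t, S.T1 C1 ≤ t → t ≤ S.T → C1 / (3 * S.cbrtMP) ≤ S.resp t i j r) := by
  obtain ⟨ζ, hζ0, hζ1, hζ2⟩ : ∃ ζ : ℝ, 0 < ζ ∧ ζ ≤ 1 / 2500 ∧ 125 * ζ ≤ C1 :=
    ⟨min (1 / 2500) (C1 / 125), by positivity, min_le_left _ _, by
      linarith [min_le_right (1 / 2500) (C1 / 125)]⟩
  set a := 300000 * (1 + Real.exp (C0 ^ 3 + 1))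
  set b := 300000 * (22 * (1700 * (1 + Real.exp (4 * C1 ^ 3))) ^ 2)
  have ha : 0 < a := by positivity
  have hb : 0 < b := by positivity
  have hζ3 : 0 < (3 / ζ) ^ 6 := by positivity
  have hζ4 : 0 < 2 / ζ := by positivity
  refine ⟨2000 + C1 + a + b + (3 / ζ) ^ 6 + 2 / ζ, by linarith, fun C hC S hdyn hE H hS => ?_⟩
  have hCζ : 2 ≤ C * ζ := by
    rw [← div_le_iff₀ hζ0]
    linarith
  exact main_of_paramFacts hdyn hE
    (paramFacts_of_cond hζ0 (by linarith) (by linarith) H hS)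
    ⟨hζ0, hζ1, by linarith, hCζ⟩ hC0 hC1 hζ2 (by linarith) (by linarith) (by linarith)

end Setting

/-- Noise memorization time. On the event `E`, under Condition (H)
in the sparse-unlearnable regime: (1) the hitting time `T₁` obeys the stated two-sided
bound; (2) `T₀ < T₁`; (3) some unlearnable sample has a memorized noise response of
order `C₁/(3(mP)^{1/3})` at every iteration `t ∈ [T₁, T]`. -/
theorem stmt14 :
    ∃ C0 C1 C : ℝ, 0 < C0 ∧ 0 < C1 ∧ 0 < C ∧
      ∀ S : Setting, S.ATDyn → S.EventE → S.CondH C → S.SparseRegime C →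
        ((S.N : ℝ) /
            (76800 * Real.log ((16 : ℝ) * S.N * S.m * S.P / S.delta) ^ ((3 : ℝ) / 2) *
              S.eta * S.sigma0 * S.sigman ^ 3 * ((S.d : ℝ) * Real.sqrt S.d)) ≤ (S.T1 C1 : ℝ) ∧
          (S.T1 C1 : ℝ) ≤
            60 * S.N * (1 + Real.exp (4 * C1 ^ 3)) /
              (S.eta * S.sigma0 * S.sigman ^ 3 * ((S.d : ℝ) * Real.sqrt S.d))) ∧
        S.T0 C0 < S.T1 C1 ∧
        (∃ i ∈ S.SU, ∃ j, j ≠ S.sig i ∧ ∃ r : Fin S.m,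
          ∀ t, S.T1 C1 ≤ t → t ≤ S.T →
            C1 / (3 * ((S.m : ℝ) * S.P) ^ ((1 : ℝ) / 3)) ≤ S.y i * dot (S.w t r) (S.x i j)) := by
  obtain ⟨C, hC, h⟩ := Setting.noise_memorization one_pos one_pos
  refine ⟨1, 1, C, one_pos, one_pos, by linarith, fun S hdyn hE H hS => ?_⟩
  obtain ⟨⟨h1, h2⟩, h3, h4⟩ := h C le_rfl S hdyn hE H hS
  have hL : S.L ^ ((3 : ℝ) / 2) = S.L * Real.sqrt S.L := by
    have hδ0 := S.hdelta0
    have hL0 : 0 ≤ S.L := by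
      apply Real.log_nonneg
      rw [le_div_iff₀ hδ0]
      have : (1 : ℝ) * 1 * 1 * 1 ≤ 16 * S.N * S.m * S.P := by
        gcongr
        · norm_num
        · exact S.one_le_N
        · exact S.one_le_m
        · exact S.one_le_P
      linarith [S.hdelta1]
    rw [show (3 : ℝ) / 2 = 1 + 1 / 2 by norm_num, Real.rpow_add_of_nonneg hL0 (by norm_num)
      (by norm_num), Real.rpow_one, Real.sqrt_eq_rpow]
  refine ⟨⟨le_trans (le_of_eq ?_) h1, h2.trans (le_of_eq ?_)⟩, h3, h4⟩
  · change (S.N : ℝ) / (76800 * S.L ^ ((3 : ℝ) / 2) * S.eta * S.sigma0 * S.sigman ^ 3 *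
      ((S.d : ℝ) * Real.sqrt S.d)) = _
    rw [hL, Setting.earlyTime, Setting.timeScale, div_div]
    congr 1
    ring
  · unfold Setting.timeScale
    ring

end AD

end
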